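/- Let p be a strictly pseudoconvex boundary point of class C² of a domain Ω in ℂⁿ. Then for every η > 0 there exists a neighborhood U of p such that for every z ∈ Ω ∩ U and every X ∈ ℂⁿ, (1 − η)·M(z;X) ≤ κ_Ω(z;X) ≤ (1 + η)·M(z;X), where M(z;X) = ( |⟨∂δ_Ω(z),X⟩|²/δ_Ω(z)² + L(z;X)/δ_Ω(z) )^{1/2}. -/

import Mathlib

open Metric MeasureTheory Set
open scoped NNReal ENNReal

noncomputable section

/-- Complex Euclidean `n`-space. -/
abbrev Cn (n : ℕ) := EuclideanSpace ℂ (Fin n)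

variable {n : ℕ}

instance : MeasurableSpace (Cn n) := borel _
instance : BorelSpace (Cn n) := ⟨rfl⟩
instance : InnerProductSpace ℝ (Cn n) := InnerProductSpace.rclikeToReal ℂ _

/-- `δ_Ω(z)`: the Euclidean distance from `z` to the boundary of `Ω`. -/
def bdist (Ω : Set (Cn n)) (z : Cn n) : ℝ := Metric.infDist z (frontier Ω)

/-- The squeezing function `σ_Ω(z)` of a (bounded) domain `Ω`. -/
def squeezing (Ω : Set (Cn n)) (z : Cn n) : ℝ :=
  sSup {r : ℝ | 0 < r ∧ ∃ f : Cn n → Cn n,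
    DifferentiableOn ℂ f Ω ∧ Set.InjOn f Ω ∧ Set.MapsTo f Ω (Metric.ball 0 1) ∧
    f z = 0 ∧ Metric.ball (0 : Cn n) r ⊆ f '' Ω}

/-- The Kobayashi metric `κ_Ω(z;X)`. -/
def kobayashi (Ω : Set (Cn n)) (z X : Cn n) : ℝ :=
  sInf {r : ℝ | ∃ (α : ℂ) (φ : ℂ → Cn n),
    DifferentiableOn ℂ φ (Metric.ball 0 1) ∧ Set.MapsTo φ (Metric.ball 0 1) Ω ∧
    φ 0 = z ∧ α • deriv φ 0 = X ∧ r = ‖α‖}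

/-- The Carathéodory metric `γ_Ω(z;X)`. -/
def caratheodory (Ω : Set (Cn n)) (z X : Cn n) : ℝ :=
  sSup {r : ℝ | ∃ f : Cn n → ℂ,
    DifferentiableOn ℂ f Ω ∧ Set.MapsTo f Ω (Metric.ball 0 1) ∧
    r = ‖fderiv ℂ f z X‖}

/-- `⟨∂ρ(q),X⟩ = Σ_j (∂ρ/∂z_j)(q) X_j`, expressed via the real differential:
`⟨∂ρ(q),X⟩ = (Dρ(q)X - i·Dρ(q)(iX))/2`. -/
def cderiv (ρ : Cn n → ℝ) (q X : Cn n) : ℂ :=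
  (((fderiv ℝ ρ q X : ℝ) : ℂ) - Complex.I * ((fderiv ℝ ρ q (Complex.I • X) : ℝ) : ℂ)) / 2

/-- The Levi form `L_ρ(q;X) = Σ_{j,k} (∂²ρ/∂z_j∂z̄_k)(q) X_j X̄_k`, expressed via the real
second differential: `L_ρ(q;X) = (D²ρ(q)[X,X] + D²ρ(q)[iX,iX])/4`. -/
def leviForm (ρ : Cn n → ℝ) (q X : Cn n) : ℝ :=
  (fderiv ℝ (fun w => fderiv ℝ ρ w X) q X
    + fderiv ℝ (fun w => fderiv ℝ ρ w (Complex.I • X)) q (Complex.I • X)) / 4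

/-- `p` is a strictly pseudoconvex boundary point of `Ω` of class `C^{m,ε}`. -/
def IsStrictPscPtHolder (Ω : Set (Cn n)) (p : Cn n) (m : ℕ) (ε : ℝ) : Prop :=
  p ∈ frontier Ω ∧ ∃ W : Set (Cn n), IsOpen W ∧ p ∈ W ∧ ∃ ρ : Cn n → ℝ,
    ContDiffOn ℝ m ρ W ∧
    (∃ C : ℝ≥0, HolderOnWith C ε.toNNReal (iteratedFDeriv ℝ m ρ) W) ∧
    Ω ∩ W = {z ∈ W | ρ z < 0} ∧
    (∀ q ∈ frontier Ω ∩ W, fderiv ℝ ρ q ≠ 0) ∧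
    (∀ q ∈ frontier Ω ∩ W, ∀ X : Cn n, X ≠ 0 → cderiv ρ q X = 0 → 0 < leviForm ρ q X)

/-- `p` is a strictly pseudoconvex boundary point of `Ω` of class `C²`. -/
def IsStrictPscPtC2 (Ω : Set (Cn n)) (p : Cn n) : Prop :=
  p ∈ frontier Ω ∧ ∃ W : Set (Cn n), IsOpen W ∧ p ∈ W ∧ ∃ ρ : Cn n → ℝ,
    ContDiffOn ℝ 2 ρ W ∧
    Ω ∩ W = {z ∈ W | ρ z < 0} ∧
    (∀ q ∈ frontier Ω ∩ W, fderiv ℝ ρ q ≠ 0) ∧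
    (∀ q ∈ frontier Ω ∩ W, ∀ X : Cn n, X ≠ 0 → cderiv ρ q X = 0 → 0 < leviForm ρ q X)

/-- An open set `D ⊆ ℂⁿ` is pseudoconvex: `u = -log dist(·, Dᶜ)` is plurisubharmonic on `D`. -/
def IsPseudoconvex (D : Set (Cn n)) : Prop :=
  IsOpen D ∧
  UpperSemicontinuousOn (fun z => -Real.log (Metric.infDist z Dᶜ)) D ∧
  ∀ a ∈ D, ∀ w : Cn n, ∀ r : ℝ, 0 < r →
    (∀ l : ℂ, ‖l‖ ≤ r → a + l • w ∈ D) →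
    -Real.log (Metric.infDist a Dᶜ) ≤
      (1 / (2 * Real.pi)) * ∫ θ in (0:ℝ)..(2 * Real.pi),
        -Real.log (Metric.infDist (a + ((r : ℂ) * Complex.exp (θ * Complex.I)) • w) Dᶜ)

/-- `cl(Ω)` admits a Stein neighborhood basis. -/
def HasSteinBasis (Ω : Set (Cn n)) : Prop :=
  ∀ W : Set (Cn n), IsOpen W → closure Ω ⊆ W →
    ∃ U : Set (Cn n), IsPseudoconvex U ∧ closure Ω ⊆ U ∧ U ⊆ W

/-- The squared `L²`-norm of `f` on `D` (as an extended nonnegative real). -/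
def L2normSq (D : Set (Cn n)) (f : Cn n → ℂ) : ℝ≥0∞ := ∫⁻ w in D, (‖f w‖₊ : ℝ≥0∞) ^ 2

/-- `J⁰_D(z) = sup {|f(z)|² : f ∈ L²_h(D), ‖f‖_D ≤ 1}`; equals the Bergman kernel on the
diagonal. -/
def J0 (D : Set (Cn n)) (z : Cn n) : ℝ :=
  sSup {v : ℝ | ∃ f : Cn n → ℂ, DifferentiableOn ℂ f D ∧ L2normSq D f ≤ 1 ∧ v = ‖f z‖ ^ 2}

/-- `J¹_D(z;X) = sup {|f'(z)X|² : f ∈ L²_h(D), ‖f‖_D ≤ 1, f(z) = 0}`. -/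
def J1 (D : Set (Cn n)) (z X : Cn n) : ℝ :=
  sSup {v : ℝ | ∃ f : Cn n → ℂ, DifferentiableOn ℂ f D ∧ L2normSq D f ≤ 1 ∧ f z = 0 ∧
    v = ‖fderiv ℂ f z X‖ ^ 2}

/-- `J²_D(z;X,Y) = sup {|Σ_{j,k} f_{ζ_jζ_k}(z) X_j Y_k|² : f ∈ L²_h(D), ‖f‖_D ≤ 1,
f(z) = 0, f'(z) = 0}`. -/
def J2 (D : Set (Cn n)) (z X Y : Cn n) : ℝ :=
  sSup {v : ℝ | ∃ f : Cn n → ℂ, DifferentiableOn ℂ f D ∧ L2normSq D f ≤ 1 ∧ f z = 0 ∧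
    fderiv ℂ f z = 0 ∧ v = ‖fderiv ℂ (fun w => fderiv ℂ f w Y) z X‖ ^ 2}

/-- The Bergman metric `β_D(z;X) = (J¹_D(z;X)/J⁰_D(z))^{1/2}`. -/
def bergman (D : Set (Cn n)) (z X : Cn n) : ℝ := Real.sqrt (J1 D z X / J0 D z)

/-- The bisectional curvature of the Bergman metric. -/
def bisect (D : Set (Cn n)) (z X Y : Cn n) : ℝ :=
  2 - J0 D z * J2 D z X Y / (J1 D z X * J1 D z Y)

/-- The holomorphic sectional curvature `s_D(z;X)` of the Bergman metric. -/
def sectCurv (D : Set (Cn n)) (z X : Cn n) : ℝ := bisect D z X X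

/-- The Ricci curvature `r_D(z;X)` of the Bergman metric (w.r.t. the standard basis). -/
def ricciCurv (D : Set (Cn n)) (z X : Cn n) : ℝ :=
  ∑ j : Fin n, bisect D z (EuclideanSpace.single j 1) X

/-- The scalar curvature `t_D(z)` of the Bergman metric. -/
def scalarCurv (D : Set (Cn n)) (z : Cn n) : ℝ :=
  ∑ j : Fin n, ricciCurv D z (EuclideanSpace.single j 1)

/-- `M(z;X) = ( |⟨∂δ_Ω(z),X⟩|²/δ_Ω(z)² + L(z;X)/δ_Ω(z) )^{1/2}`, where `L` is the Levi form
of `-δ_Ω`. -/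
def Mfun (Ω : Set (Cn n)) (z X : Cn n) : ℝ :=
  Real.sqrt (‖cderiv (bdist Ω) z X‖ ^ 2 / (bdist Ω z) ^ 2
    + leviForm (fun w => -(bdist Ω w)) z X / bdist Ω z)

/-- The sesquilinear form of the Bergman metric, recovered from `β²` by polarization. -/
def bergForm (D : Set (Cn n)) (z X Y : Cn n) : ℂ :=
  (((J1 D z (X + Y) / J0 D z : ℝ) : ℂ) - ((J1 D z (X - Y) / J0 D z : ℝ) : ℂ)
    + Complex.I * ((J1 D z (X + Complex.I • Y) / J0 D z : ℝ) : ℂ)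
    - Complex.I * ((J1 D z (X - Complex.I • Y) / J0 D z : ℝ) : ℂ)) / 4

/-- The Hermitian matrix `(B_{jk}(z))` of the Bergman metric in the standard coordinates. -/
def bergMat (D : Set (Cn n)) (z : Cn n) : Matrix (Fin n) (Fin n) ℂ :=
  fun j k => bergForm D z (EuclideanSpace.single j 1) (EuclideanSpace.single k 1)

/-- The canonical Bergman invariant `J_D(z) = Δ_D(z)/K_D(z)`. -/
def canonInvariant (D : Set (Cn n)) (z : Cn n) : ℂ :=
  (bergMat D z).det / ((J0 D z : ℝ) : ℂ)

open Filter Topology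

theorem sd_foot {E : Type*} [NormedAddCommGroup E] [InnerProductSpace ℝ E] [FiniteDimensional ℝ E]
    (ρ : E → ℝ) (g : E → E) (p : E) (hρ : ContDiffAt ℝ 2 ρ p) (hg : ContDiffAt ℝ 1 g p)
    (hgi : ∀ z v, inner ℝ (g z) v = fderiv ℝ ρ z v) (hρp : ρ p = 0) (hgp : g p ≠ 0) :
    ∃ (q : E → E) (t : E → ℝ), ContDiffAt ℝ 1 q p ∧ ContDiffAt ℝ 1 t p ∧ q p = p ∧ t p = 0 ∧
      (∀ᶠ z in 𝓝 p, q z + t z • g (q z) = z ∧ ρ (q z) = 0) ∧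
      ∃ ε > 0, ∀ z y : E, ∀ c : ℝ, ‖y - p‖ < ε → |c| < ε → y + c • g y = z → ρ y = 0 →
        y = q z ∧ c = t z := by
  have : CompleteSpace E := FiniteDimensional.complete ℝ E
  let G : E × ℝ → E × ℝ := fun x => (x.1 + x.2 • g x.1, ρ x.1)
  have hG : ContDiffAt ℝ 1 G (p, 0) := by
    have h1 : ContDiffAt ℝ 1 (fun x : E × ℝ => g x.1) (p, 0) :=
      ContDiffAt.comp (p, (0:ℝ)) (by simpa using hg) contDiffAt_fst
    have h2 : ContDiffAt ℝ 1 (fun x : E × ℝ => ρ x.1) (p, 0) :=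
      ContDiffAt.comp (p, (0:ℝ)) (by simpa using hρ.of_le (by norm_num)) contDiffAt_fst
    exact (contDiffAt_fst.add (contDiffAt_snd.smul h1)).prodMk h2
  let D : E × ℝ →L[ℝ] E × ℝ :=
    (ContinuousLinearMap.fst ℝ E ℝ + (ContinuousLinearMap.snd ℝ E ℝ).smulRight (g p)).prod
      ((fderiv ℝ ρ p).comp (ContinuousLinearMap.fst ℝ E ℝ))
  have hD : HasFDerivAt G D (p, 0) := by
    have h1 : HasFDerivAt (fun x : E × ℝ => g x.1)
        ((fderiv ℝ g p).comp (ContinuousLinearMap.fst ℝ E ℝ)) (p, 0) :=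
      HasFDerivAt.comp (p, (0:ℝ)) (by simpa using (hg.differentiableAt (by norm_num)).hasFDerivAt)
        hasFDerivAt_fst
    have h2 : HasFDerivAt (fun x : E × ℝ => ρ x.1)
        ((fderiv ℝ ρ p).comp (ContinuousLinearMap.fst ℝ E ℝ)) (p, 0) :=
      HasFDerivAt.comp (p, (0:ℝ)) (by simpa using (hρ.differentiableAt (by norm_num)).hasFDerivAt)
        hasFDerivAt_fst
    have h3 := (hasFDerivAt_fst.add ((hasFDerivAt_snd (𝕜 := ℝ) (p := (p, (0:ℝ)))).smul h1)).prodMk h2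
    refine h3.congr_fderiv ?_
    ext x <;> simp [D]
  have hinj : Function.Injective D := by
    rw [injective_iff_map_eq_zero]
    rintro ⟨v, s⟩ h
    have h1 : v + s • g p = 0 := by simpa [D] using congrArg Prod.fst h
    have h2 : inner ℝ (g p) v = 0 := by rw [hgi]; simpa [D] using congrArg Prod.snd h
    have h3 : inner ℝ (g p) (v + s • g p) = 0 := by rw [h1]; simp
    rw [inner_add_right, h2, inner_smul_right, real_inner_self_eq_norm_sq] at h3
    have hs : s = 0 := by
      have : ‖g p‖ ^ 2 ≠ 0 := by simpa using hgp
      simpa [this, hgp] using h3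
    subst hs
    simpa using h1
  let D' : (E × ℝ) ≃L[ℝ] (E × ℝ) :=
    (LinearEquiv.ofInjectiveEndo (D : E × ℝ →ₗ[ℝ] E × ℝ) hinj).toContinuousLinearEquiv
  have hD' : HasFDerivAt G (D' : E × ℝ →L[ℝ] E × ℝ) (p, 0) := by
    refine hD.congr_fderiv ?_
    ext x <;> rfl
  have hn : (1 : WithTop ℕ∞) ≠ 0 := by norm_num
  let e := hG.toOpenPartialHomeomorph G hD' hn
  have hs : (p, (0:ℝ)) ∈ e.source := hG.mem_toOpenPartialHomeomorph_source hD' hn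
  have hGp : G (p, 0) = (p, 0) := by simp [G, hρp]
  have hH : ContDiffAt ℝ 1 e.symm (p, 0) := by
    have := hG.to_localInverse hD' hn
    rw [hGp] at this
    exact this
  have hep : e.symm (p, 0) = (p, 0) := by
    conv_lhs => rw [← hGp]
    exact e.left_inv hs
  have hin : ContDiffAt ℝ 1 (fun z : E => ((z, 0) : E × ℝ)) p := contDiffAt_id.prodMk contDiffAt_const
  have hHz : ContDiffAt ℝ 1 (fun z : E => e.symm (z, 0)) p := ContDiffAt.comp p (by exact hH) hin
  refine ⟨fun z => (e.symm (z, 0)).1, fun z => (e.symm (z, 0)).2, contDiffAt_fst.comp p hHz,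
    contDiffAt_snd.comp p hHz, by simp [hep], by simp [hep], ?_, ?_⟩
  · have ht : (p, (0:ℝ)) ∈ e.target := by
      have := e.map_source hs
      rwa [show e (p, 0) = (p, 0) from hGp] at this
    have : ∀ᶠ z in 𝓝 p, ((z, 0) : E × ℝ) ∈ e.target :=
      hin.continuousAt.eventually (e.open_target.mem_nhds ht)
    filter_upwards [this] with z hz
    have h := e.right_inv hz
    have h' : G (e.symm (z, 0)) = (z, 0) := h
    exact ⟨congrArg Prod.fst h', congrArg Prod.snd h'⟩
  · obtain ⟨ε, hε, hb⟩ := Metric.mem_nhds_iff.1 (e.open_source.mem_nhds hs)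
    refine ⟨ε, hε, fun z y c hy hc h1 h2 => ?_⟩
    have hm : (y, c) ∈ e.source := by
      apply hb
      rw [mem_ball, Prod.dist_eq, max_lt_iff, dist_eq_norm, dist_eq_norm]
      simpa using ⟨hy, hc⟩
    have h := e.left_inv hm
    have h' : e (y, c) = (z, 0) := Prod.ext h1 h2
    rw [h'] at h
    simp [h]

/-- derivative of the signed distance -/
theorem sd_deriv {E : Type*} [NormedAddCommGroup E] [InnerProductSpace ℝ E] [FiniteDimensional ℝ E]
    (ρ : E → ℝ) (g : E → E) (p : E) (hρ : ContDiffAt ℝ 2 ρ p) (hg : ContDiffAt ℝ 1 g p)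
    (hgi : ∀ z v, inner ℝ (g z) v = fderiv ℝ ρ z v) (hgp : g p ≠ 0)
    (q : E → E) (t : E → ℝ) (hq : ContDiffAt ℝ 1 q p) (ht : ContDiffAt ℝ 1 t p) (hqp : q p = p)
    (heq : ∀ᶠ z in 𝓝 p, q z + t z • g (q z) = z ∧ ρ (q z) = 0) :
    ∀ᶠ z in 𝓝 p, HasFDerivAt (fun z => t z * ‖g (q z)‖)
      (innerSL ℝ (‖g (q z)‖⁻¹ • g (q z))) z := by
  have hq' := hq.eventually (by norm_num)
  have ht' := ht.eventually (by norm_num)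
  have hqc : Tendsto q (𝓝 p) (𝓝 p) := by simpa [hqp] using hq.continuousAt.tendsto
  have hg' := hqc.eventually (hg.eventually (by norm_num))
  have hρ' := hqc.eventually ((hρ.of_le (show (1:WithTop ℕ∞) ≤ 2 by norm_num)).eventually (by norm_num))
  have hg0 : ∀ᶠ z in 𝓝 p, g (q z) ≠ 0 :=
    hqc.eventually (hg.continuousAt.eventually_ne hgp)
  filter_upwards [hq', ht', hg', hρ', hg0, heq.eventually_nhds] with z h1 h2 h3 h4 h5 h6
  have dq := (h1.differentiableAt (by norm_num)).hasFDerivAt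
  have dt := (h2.differentiableAt (by norm_num)).hasFDerivAt
  have dg := ((h3.differentiableAt (by norm_num)).hasFDerivAt).comp z dq
  have dρ := ((h4.differentiableAt (by norm_num)).hasFDerivAt).comp z dq
  set A := fderiv ℝ q z
  set T := fderiv ℝ t z
  set B := (fderiv ℝ g (q z)).comp A
  have e1 : ∀ v, inner ℝ (g (q z)) (A v) = 0 := by
    intro v
    have : HasFDerivAt (ρ ∘ q) (0 : E →L[ℝ] ℝ) z := by
      refine (hasFDerivAt_const (0:ℝ) z).congr_of_eventuallyEq ?_
      filter_upwards [h6] with y hy using hy.2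
    have := congrArg (fun L => L v) (dρ.unique this)
    rw [hgi]; simpa using this
  have e2 : ∀ v, A v + (t z • B v + T v • g (q z)) = v := by
    intro v
    have h : HasFDerivAt (fun y => q y + t y • (g ∘ q) y) (ContinuousLinearMap.id ℝ E) z := by
      refine (hasFDerivAt_id z).congr_of_eventuallyEq ?_
      filter_upwards [h6] with y hy using hy.1
    have h' := dq.add (dt.smul dg)
    have := congrArg (fun L => L v) (h'.unique h)
    simpa using this
  have dn : HasFDerivAt (fun z => ‖g (q z)‖) (‖g (q z)‖⁻¹ • (innerSL ℝ (g (q z))).comp B) z := by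
    have hs := (dg.norm_sq).sqrt (by simpa using h5)
    have : (fun z => √(‖(g ∘ q) z‖ ^ 2)) = fun z => ‖g (q z)‖ := by
      ext y; simp [Real.sqrt_sq]
    rw [this] at hs
    refine hs.congr_fderiv ?_
    ext v
    simp [Real.sqrt_sq]
    field_simp
  have := dt.mul dn
  refine this.congr_fderiv ?_
  ext v
  have h7 : inner ℝ (g (q z)) v = t z * inner ℝ (g (q z)) (B v) + T v * ‖g (q z)‖ ^ 2 := by
    conv_lhs => rw [← e2 v]
    rw [inner_add_right, e1, inner_add_right, inner_smul_right, inner_smul_right,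
      real_inner_self_eq_norm_sq]
    ring
  have h8 : ‖g (q z)‖ ≠ 0 := by simpa using h5
  simp [inner_smul_left, h7]
  field_simp

theorem sd_main {E : Type*} [NormedAddCommGroup E] [InnerProductSpace ℝ E] [FiniteDimensional ℝ E]
    (Ω W : Set E) (hΩ : IsOpen Ω) (p : E) (hp : p ∈ frontier Ω) (hW : IsOpen W) (hpW : p ∈ W)
    (ρ : E → ℝ) (hρW : ContDiffOn ℝ 2 ρ W) (hdef : Ω ∩ W = {z ∈ W | ρ z < 0})
    (hne : fderiv ℝ ρ p ≠ 0) :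
    ∃ r : E → ℝ, ContDiffAt ℝ 2 r p ∧ r p = 0 ∧
      (∀ᶠ z in 𝓝 p, z ∈ Ω ↔ r z < 0) ∧
      (∀ᶠ z in 𝓝 p, z ∈ Ω → infDist z (frontier Ω) = - r z) ∧
      ∃ l > (0:ℝ), fderiv ℝ r p = l • fderiv ℝ ρ p ∧
        ∀ X Y, fderiv ℝ ρ p X = 0 → fderiv ℝ ρ p Y = 0 →
          fderiv ℝ (fderiv ℝ r) p X Y = l * fderiv ℝ (fderiv ℝ ρ) p X Y := by
  have : CompleteSpace E := FiniteDimensional.complete ℝ E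
  have : ProperSpace E := FiniteDimensional.proper ℝ E
  have hρ : ContDiffAt ℝ 2 ρ p := hρW.contDiffAt (hW.mem_nhds hpW)
  have hfd : ContDiffAt ℝ 1 (fderiv ℝ ρ) p := hρ.fderiv_right (by norm_num)
  let J := (InnerProductSpace.toDual ℝ E).symm
  let g : E → E := fun z => J (fderiv ℝ ρ z)
  have hg : ContDiffAt ℝ 1 g p := J.toContinuousLinearEquiv.contDiff.contDiffAt.comp p hfd
  have hgi : ∀ z v, inner ℝ (g z) v = fderiv ℝ ρ z v := by
    intro z v; exact InnerProductSpace.toDual_symm_apply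
  have hgp : g p ≠ 0 := by simpa [g, J] using hne
  have hΩW : ∀ z ∈ W, (z ∈ Ω ↔ ρ z < 0) := by
    intro z hz
    have : z ∈ Ω ∩ W ↔ z ∈ {z ∈ W | ρ z < 0} := by rw [hdef]
    simpa [hz] using this
  have hfr : ∀ y ∈ frontier Ω, y ∈ W → ρ y = 0 := by
    intro y hy hyW
    apply le_antisymm
    · by_contra hcon
      push Not at hcon
      have hc : ContinuousAt ρ y := (hρW.contDiffAt (hW.mem_nhds hyW)).continuousAt
      have h1 : ∀ᶠ x in 𝓝 y, x ∉ Ω := by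
        filter_upwards [hc.eventually (lt_mem_nhds hcon), hW.mem_nhds hyW] with x hx hxW
        rw [hΩW x hxW]; linarith
      have h2 := mem_closure_iff_frequently.1 hy.1
      exact h2 h1
    · have : y ∉ Ω := by
        have := hy.2; rwa [hΩ.interior_eq] at this
      rw [hΩW y hyW] at this; linarith
  have hρp : ρ p = 0 := hfr p hp hpW
  obtain ⟨q, t, hq, ht, hqp, htp, heq, ε, hε, huniq⟩ := sd_foot ρ g p hρ hg hgi hρp hgp
  have hder := sd_deriv ρ g p hρ hg hgi hgp q t hq ht hqp heq
  have hqc : Tendsto q (𝓝 p) (𝓝 p) := by simpa [hqp] using hq.continuousAt.tendsto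
  have hgc : Tendsto (fun z => g (q z)) (𝓝 p) (𝓝 (g p)) := hg.continuousAt.tendsto.comp hqc
  -- sign
  have hgpn : 0 < ‖g p‖ := norm_pos_iff.2 hgp
  have hsign : ∀ᶠ z in 𝓝 p, z ∈ Ω ↔ t z * ‖g (q z)‖ < 0 := by
    have hst := hρ.hasStrictFDerivAt (by norm_num)
    have hlo := hst.isLittleO.def (c := ‖g p‖ / 4) (by positivity)
    have hlo' : ∀ᶠ z in 𝓝 p, ‖ρ z - ρ (q z) - fderiv ℝ ρ p (z - q z)‖ ≤ ‖g p‖ / 4 * ‖z - q z‖ :=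
      (tendsto_id.prodMk_nhds hqc).eventually hlo
    have hin : ∀ᶠ z in 𝓝 p, ‖g p‖ * ‖g (q z)‖ / 2 < inner ℝ (g p) (g (q z)) := by
      have h1 : Tendsto (fun z => ‖g p‖ * ‖g (q z)‖ / 2) (𝓝 p) (𝓝 (‖g p‖ * ‖g p‖ / 2)) :=
        (hgc.norm.const_mul _).div_const _
      have h2 : Tendsto (fun z => inner ℝ (g p) (g (q z))) (𝓝 p) (𝓝 (inner ℝ (g p) (g p))) :=
        tendsto_const_nhds.inner hgc
      refine h1.eventually_lt h2 ?_
      rw [real_inner_self_eq_norm_mul_norm]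
      nlinarith
    have hgne := hgc.eventually_ne hgp
    filter_upwards [hlo', hin, heq, hW.mem_nhds hpW, hgne] with z h1 h2 h3 h4 h5
    rw [hΩW z h4]
    have hz : z - q z = t z • g (q z) := by rw [sub_eq_iff_eq_add']; exact h3.1.symm
    have hgq : 0 < ‖g (q z)‖ := norm_pos_iff.2 h5
    rw [hz, h3.2, map_smul, ← hgi, norm_smul, Real.norm_eq_abs, Real.norm_eq_abs, smul_eq_mul] at h1
    have h6 := abs_le.1 h1
    have hpos : 0 < ‖g p‖ * ‖g (q z)‖ := by positivity
    constructor
    · intro h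
      by_contra hcon
      have ht0 : 0 ≤ t z := by
        by_contra h'; push Not at h'
        exact hcon (mul_neg_of_neg_of_pos h' hgq)
      rw [abs_of_nonneg ht0] at h6
      nlinarith
    · intro h
      have ht0 : t z < 0 := by
        by_contra h'; push Not at h'
        have : 0 ≤ t z * ‖g (q z)‖ := by positivity
        linarith
      rw [abs_of_neg ht0] at h6
      nlinarith
  -- distance
  have hdist : ∀ᶠ z in 𝓝 p, infDist z (frontier Ω) = |t z| * ‖g (q z)‖ := by
    have hcl : IsClosed (frontier Ω) := isClosed_frontier
    have hgood : ∀ᶠ y in 𝓝 p, y ∈ W ∧ ‖y - p‖ < ε ∧ ‖g p‖ / 2 < ‖g y‖ ∧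
        (∀ᶠ x in 𝓝 y, ρ x = 0 → x ∈ frontier Ω) := by
      have h1 : ∀ᶠ y in 𝓝 p, ‖g p‖ / 2 < ‖g y‖ :=
        hg.continuousAt.norm.eventually (lt_mem_nhds (by linarith))
      have h2 : ∀ᶠ x in 𝓝 p, ρ x = 0 → x ∈ frontier Ω := by
        filter_upwards [hW.mem_nhds hpW, hg.continuousAt.eventually_ne hgp] with x hxW hgx hx
        refine ⟨?_, ?_⟩
        · by_contra hcon
          have h3 : ∀ᶠ y in 𝓝 x, y ∉ Ω := by
            rw [mem_closure_iff_frequently, not_frequently] at hcon; exact hcon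
          have h4 : IsLocalMin ρ x := by
            filter_upwards [h3, hW.mem_nhds hxW] with y hy hyW
            rw [hΩW y hyW] at hy; linarith
          have h5 := h4.fderiv_eq_zero
          apply hgx
          simp [g, h5]
        · rw [hΩ.interior_eq, hΩW x hxW]; linarith
      have h3 : ∀ᶠ y in 𝓝 p, ‖y - p‖ < ε := by
        filter_upwards [ball_mem_nhds p hε] with y hy
        rwa [mem_ball, dist_eq_norm] at hy
      filter_upwards [hW.mem_nhds hpW, h3, h1, h2.eventually_nhds] with y a b c d using ⟨a, b, c, d⟩
    obtain ⟨e, he, hgood⟩ := Metric.eventually_nhds_iff.1 hgood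
    have hmin : 0 < min (e / 2) (ε * ‖g p‖ / 2) := by positivity
    filter_upwards [ball_mem_nhds p hmin, heq] with z hz hzeq
    rw [mem_ball, lt_min_iff] at hz
    obtain ⟨y, hy, hyd⟩ := hcl.exists_infDist_eq_dist ⟨p, hp⟩ z
    have hzy : dist z y ≤ dist z p := by rw [← hyd]; exact infDist_le_dist_of_mem hp
    have hyp : dist y p < e := by
      have := dist_triangle_left y p z
      linarith [hz.1]
    obtain ⟨hyW, hyε, hgy, hyfr⟩ := hgood hyp
    have hρy := hfr y hy hyW
    have hmin : IsLocalMinOn (fun x => ‖z - x‖ ^ 2) {x | ρ x = ρ y} y := by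
      rw [IsLocalMinOn, IsMinFilter, eventually_nhdsWithin_iff]
      filter_upwards [hyfr] with x hx hx2
      have hx3 : x ∈ frontier Ω := hx (by rw [← hρy]; exact hx2)
      have := infDist_le_dist_of_mem (x := z) hx3
      rw [hyd, dist_eq_norm, dist_eq_norm] at this
      gcongr
    have hsy := (hρW.contDiffAt (hW.mem_nhds hyW)).hasStrictFDerivAt (n := 2) (by norm_num)
    have hsn : HasStrictFDerivAt (fun x => ‖z - x‖ ^ 2)
        (-(2 • (innerSL ℝ (z - y)))) y := by
      have := (hasStrictFDerivAt_norm_sq (z - y)).comp y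
        ((hasStrictFDerivAt_const z y).sub (hasStrictFDerivAt_id y))
      refine this.congr_fderiv ?_
      ext v; simp
    obtain ⟨a, b, hab, h0⟩ := IsLocalExtrOn.exists_multipliers_of_hasStrictFDerivAt_1d (Or.inl hmin) hsy hsn
    have hgy0 : g y ≠ 0 := by
      intro h; rw [h, norm_zero] at hgy; linarith
    have h1 : a • g y = (2 * b) • (z - y) := by
      apply ext_inner_right ℝ
      intro v
      have := congrArg (fun L => L v) h0
      simp at this
      rw [inner_smul_left, inner_smul_left, hgi]
      simp only [conj_trivial, inner_sub_left]
      linarith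
    have hb : b ≠ 0 := by
      rintro rfl
      have ha : a ≠ 0 := by simpa using hab
      simp [ha, hgy0] at h1
    have h2 : z - y = (a / (2 * b)) • g y := by
      rw [div_eq_inv_mul, mul_smul, h1, smul_smul, inv_mul_cancel₀ (by simpa using hb), one_smul]
    set c := a / (2 * b)
    have hnorm : dist z y = |c| * ‖g y‖ := by
      rw [dist_eq_norm, h2, norm_smul, Real.norm_eq_abs]
    have hc : |c| < ε := by
      have h3 : |c| * (‖g p‖ / 2) ≤ |c| * ‖g y‖ := by gcongr
      have h4 : |c| * (‖g p‖ / 2) < ε * (‖g p‖ / 2) := by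
        calc _ ≤ _ := h3
          _ = dist z y := hnorm.symm
          _ ≤ _ := hzy
          _ < _ := by linarith [hz.2]
      exact lt_of_mul_lt_mul_right h4 (by positivity)
    obtain ⟨h5, h6⟩ := huniq z y c hyε hc (by rw [← h2]; abel) hρy
    rw [hyd, hnorm, h6, h5]
  have hν : ContDiffAt ℝ 1 (fun z => ‖g (q z)‖⁻¹ • g (q z)) p := by
    have h1 : ContDiffAt ℝ 1 (fun z => g (q z)) p :=
      ContDiffAt.comp (g := g) p (by rw [hqp]; exact hg) hq
    have h2 : g (q p) ≠ 0 := by rwa [hqp]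
    exact ((h1.norm ℝ h2).inv (by simpa using h2)).smul h1
  have hfd' : (fun z => innerSL ℝ (‖g (q z)‖⁻¹ • g (q z))) =ᶠ[𝓝 p] fderiv ℝ (fun z => t z * ‖g (q z)‖) := by
    filter_upwards [hder] with z hz using hz.fderiv.symm
  refine ⟨fun z => t z * ‖g (q z)‖, ?_, by simp [htp], hsign, ?_, ‖g p‖⁻¹, by positivity, ?_, ?_⟩
  · have := (contDiffAt_succ_iff_hasFDerivAt (𝕜 := ℝ) (f := fun z => t z * ‖g (q z)‖) (x := p) (n := 1)).2
      ⟨fun z => innerSL ℝ (‖g (q z)‖⁻¹ • g (q z)), ⟨_, hder, fun x hx => hx⟩,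
        (innerSL ℝ).contDiff.contDiffAt.comp p hν⟩
    norm_num at this
    exact this
  · filter_upwards [hsign, hdist] with z h1 h2 h3
    have h4 := h1.1 h3
    have : |t z| * ‖g (q z)‖ = |t z * ‖g (q z)‖| := by rw [abs_mul, abs_norm]
    rw [h2, this, abs_of_neg h4]
  · rw [← hfd'.eq_of_nhds]
    ext v
    simp [hqp, inner_smul_left, hgi]
  · intro X Y hX hY
    rw [← hfd'.fderiv_eq]
    have d1 : HasFDerivAt (fun z => innerSL ℝ (‖g (q z)‖⁻¹ • g (q z))) 
        ((innerSL ℝ).comp (fderiv ℝ (fun z => ‖g (q z)‖⁻¹ • g (q z)) p)) p :=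
      (innerSL ℝ).hasFDerivAt.comp p (hν.differentiableAt (by norm_num)).hasFDerivAt
    rw [d1.fderiv]
    have dq := (hq.differentiableAt (by norm_num)).hasFDerivAt
    have dt := (ht.differentiableAt (by norm_num)).hasFDerivAt
    have dg0 := (hg.differentiableAt (by norm_num)).hasFDerivAt
    have dg : HasFDerivAt (fun z => g (q z)) ((fderiv ℝ g p).comp (fderiv ℝ q p)) p :=
      HasFDerivAt.comp (g := g) p (by rw [hqp]; exact dg0) dq
    have e1 : inner ℝ (g p) (fderiv ℝ q p X) = 0 := by
      have dρ : HasFDerivAt (fun z => ρ (q z)) ((fderiv ℝ ρ p).comp (fderiv ℝ q p)) p :=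
        HasFDerivAt.comp p (by rw [hqp]; exact (hρ.differentiableAt (by norm_num)).hasFDerivAt) dq
      have : HasFDerivAt (fun z => ρ (q z)) (0 : E →L[ℝ] ℝ) p := by
        refine (hasFDerivAt_const (0:ℝ) p).congr_of_eventuallyEq ?_
        filter_upwards [heq] with y hy using hy.2
      have := congrArg (fun L => L X) (dρ.unique this)
      rw [hgi]; simpa using this
    have e2 : fderiv ℝ q p X + fderiv ℝ t p X • g p = X := by
      have h : HasFDerivAt (fun y => q y + t y • g (q y)) (ContinuousLinearMap.id ℝ E) p := by
        refine (hasFDerivAt_id p).congr_of_eventuallyEq ?_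
        filter_upwards [heq] with y hy using hy.1
      have := congrArg (fun L => L X) ((dq.add (dt.smul dg)).unique h)
      simpa [htp, hqp] using this
    have e3 : fderiv ℝ q p X = X := by
      have h1 : inner ℝ (g p) X = 0 := by rw [hgi]; exact hX
      conv at h1 => lhs; rw [← e2]
      rw [inner_add_right, e1, inner_smul_right, real_inner_self_eq_norm_sq] at h1
      have h2 : fderiv ℝ t p X = 0 := by
        have : ‖g p‖ ^ 2 ≠ 0 := by positivity
        simpa [this, hgpn.ne'] using h1
      rw [h2] at e2; simpa using e2
    have dk : DifferentiableAt ℝ (fun z => ‖g (q z)‖⁻¹) p := by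
      have h2 : g (q p) ≠ 0 := by rwa [hqp]
      exact (dg.differentiableAt.norm ℝ h2).inv (by simpa using h2)
    have e4 : fderiv ℝ (fun z => ‖g (q z)‖⁻¹ • g (q z)) p X = 
        ‖g p‖⁻¹ • fderiv ℝ g p X + fderiv ℝ (fun z => ‖g (q z)‖⁻¹) p X • g p := by
      have h := (dk.hasFDerivAt.smul dg).fderiv
      have h' : (fun z => ‖g (q z)‖⁻¹ • g (q z)) = ((fun z => ‖g (q z)‖⁻¹) • fun z => g (q z)) := rfl
      rw [h', h]
      simp [e3, hqp]
    have e5 : inner ℝ (fderiv ℝ g p X) Y = fderiv ℝ (fderiv ℝ ρ) p X Y := by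
      have h1 := dg0.inner ℝ (hasFDerivAt_const Y p)
      have h2 : HasFDerivAt (fun z => fderiv ℝ ρ z Y)
          ((ContinuousLinearMap.apply ℝ ℝ Y).comp (fderiv ℝ (fderiv ℝ ρ) p)) p :=
        (ContinuousLinearMap.apply ℝ ℝ Y).hasFDerivAt.comp p
          (hfd.differentiableAt (by norm_num)).hasFDerivAt
      have h3 : (fun z => inner ℝ (g z) Y) = fun z => fderiv ℝ ρ z Y := funext fun z => hgi z Y
      rw [h3] at h1
      have := congrArg (fun L => L X) (h1.unique h2)
      simpa using this
    simp only [ContinuousLinearMap.comp_apply, innerSL_apply_apply]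
    rw [e4, inner_add_left, inner_smul_left, inner_smul_left, e5, hgi, hY]
    simp

theorem taylor_two {E : Type*} [NormedAddCommGroup E] [NormedSpace ℝ E]
    (r : E → ℝ) (p : E) (hr : ContDiffAt ℝ 2 r p) (ε : ℝ) (hε : 0 < ε) :
    ∃ R > 0, ∀ z ∈ ball p R, ∀ w ∈ ball p R,
      |r w - r z - fderiv ℝ r z (w - z) - fderiv ℝ (fderiv ℝ r) p (w - z) (w - z) / 2|
        ≤ ε * ‖w - z‖ ^ 2 := by
  have hfd : ContDiffAt ℝ 1 (fderiv ℝ r) p := hr.fderiv_right (by norm_num)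
  have hsym : IsSymmSndFDerivAt ℝ r p := hr.isSymmSndFDerivAt (by simp)
  have hst := (hfd.hasStrictFDerivAt (by norm_num)).isLittleO.def hε
  have hd := hr.eventually (by simp)
  rw [nhds_prod_eq] at hst
  obtain ⟨u, hu, hu2⟩ := (Filter.eventually_prod_self_iff').1 hst
  obtain ⟨R, hR, hR2⟩ := Metric.mem_nhds_iff.1 (inter_mem hu hd)
  refine ⟨R, hR, fun z hz w hw => ?_⟩
  set H := fderiv ℝ (fderiv ℝ r) p
  have hder : ∀ x ∈ segment ℝ z w, HasFDerivWithinAt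
      (fun x => r x - fderiv ℝ r z x - H (x - z) (x - z) / 2)
      (fderiv ℝ r x - fderiv ℝ r z - H (x - z)) (segment ℝ z w) x := by
    intro x hx
    have hxb : x ∈ ball p R := (convex_ball p R).segment_subset hz hw hx
    have h1 : HasFDerivAt r (fderiv ℝ r x) x :=
      (ContDiffAt.differentiableAt (n := 2) (hR2 hxb).2 (by norm_num)).hasFDerivAt
    have h2 : HasFDerivAt (fun x => x - z) (ContinuousLinearMap.id ℝ E) x :=
      (hasFDerivAt_id x).sub_const z
    have h3 : HasFDerivAt (fun x => H (x - z)) H x := by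
      have := H.hasFDerivAt.comp x h2
      rwa [ContinuousLinearMap.comp_id] at this
    have h4 := (h3.clm_apply h2).mul_const (1/2 : ℝ)
    have h5 := (h1.sub (fderiv ℝ r z).hasFDerivAt).sub h4
    refine HasFDerivAt.hasFDerivWithinAt ?_
    refine (h5.congr_fderiv ?_).congr_of_eventuallyEq ?_
    · ext v
      have := hsym v (x - z)
      simp [H] at this ⊢
      linarith
    · filter_upwards with y
      simp; ring
  have hb : ∀ x ∈ segment ℝ z w, ‖fderiv ℝ r x - fderiv ℝ r z - H (x - z)‖ ≤ ε * ‖w - z‖ := by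
    intro x hx
    have hxb : x ∈ ball p R := (convex_ball p R).segment_subset hz hw hx
    refine (hu2 x (hR2 hxb).1 z (hR2 hz).1).trans ?_
    gcongr
    exact norm_sub_le_of_mem_segment hx
  have := (convex_segment z w).norm_image_sub_le_of_norm_hasFDerivWithin_le hder hb
    (left_mem_segment ℝ z w) (right_mem_segment ℝ z w)
  rw [Real.norm_eq_abs] at this
  calc _ = _ := by congr 1; simp; ring
    _ ≤ _ := this
    _ = _ := by ring

theorem disc_deriv_bound {E : Type*} [NormedAddCommGroup E] [NormedSpace ℂ E] [CompleteSpace E]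
    (Ω : Set E) (p : E) (h : E → ℂ) (hh : Differentiable ℂ h) (R k K : ℝ) (hR : 0 < R) (hk : 0 < k)
    (hK : 0 < K) (h1 : ∀ w ∈ Ω, w ∈ ball p R → (h w).re ≤ -k * ‖w - p‖ ^ 2)
    (h2 : ∀ w ∈ ball p R, ‖h w‖ ≤ K * ‖w - p‖) :
    ∃ R' > 0, ∃ B > 0, ∀ φ : ℂ → E, DifferentiableOn ℂ φ (ball 0 1) → MapsTo φ (ball 0 1) Ω →
      φ 0 ∈ ball p R' → ‖deriv φ 0‖ ≤ B := by
  obtain ⟨r2, hr2⟩ : ∃ r2, r2 = R / 2 := ⟨_, rfl⟩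
  have hr2p : 0 < r2 := by rw [hr2]; positivity
  obtain ⟨r1, hr1⟩ : ∃ r1, r1 = min (r2 / 2) (k * r2 ^ 2 / (16 * K)) := ⟨_, rfl⟩
  have hr1p : 0 < r1 := by rw [hr1]; positivity
  have hr12 : r1 ≤ r2 / 2 := by rw [hr1]; exact min_le_left _ _
  have hr1K : 2 * K * r1 ≤ k * r2 ^ 2 / 8 := by
    have : r1 ≤ k * r2 ^ 2 / (16 * K) := by rw [hr1]; exact min_le_right _ _
    rw [le_div_iff₀ (by positivity)] at this
    linarith
  obtain ⟨A, hA⟩ : ∃ A, A = 8 / (k * r2 ^ 2) * (r2 / r1) := ⟨_, rfl⟩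
  have hAp : 0 < A := by rw [hA]; positivity
  have hexp : r2 * Real.exp (A * -(k * r2 ^ 2 / 4)) < r1 * Real.exp (A * -(k * r2 ^ 2 / 8)) := by
    have e1 : A * (k * r2 ^ 2 / 8) = r2 / r1 := by rw [hA]; field_simp
    have e2 : A * -(k * r2 ^ 2 / 8) = A * -(k * r2 ^ 2 / 4) + r2 / r1 := by rw [← e1]; ring
    rw [e2, Real.exp_add]
    have e3 : r2 / r1 < Real.exp (r2 / r1) := by linarith [Real.add_one_le_exp (r2 / r1)]
    rw [div_lt_iff₀ hr1p] at e3
    have := Real.exp_pos (A * -(k * r2 ^ 2 / 4))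
    linarith [mul_lt_mul_of_pos_right e3 this]
  refine ⟨r1, hr1p, 2 * r2 * Real.exp (A * (K * r1)), by positivity, fun φ hφ hmap h0 => ?_⟩
  set z := φ 0 with hz
  rw [mem_ball, dist_eq_norm] at h0
  have hopen : IsOpen (ball (0:ℂ) 1) := isOpen_ball
  have hball0 : (0:ℂ) ∈ ball (0:ℂ) 1 := by simp
  let g : ℂ → E := fun ζ => Complex.exp (A * h (φ ζ)) • dslope φ 0 ζ
  have hg : DifferentiableOn ℂ g (ball 0 1) := by
    refine DifferentiableOn.smul ?_ ((Complex.differentiableOn_dslope (hopen.mem_nhds hball0)).2 hφ)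
    exact ((hh.comp_differentiableOn hφ).const_mul _).cexp
  have hgn : ∀ ζ : ℂ, ζ ≠ 0 → ‖g ζ‖ = ‖φ ζ - z‖ * Real.exp (A * (h (φ ζ)).re) / ‖ζ‖ := by
    intro ζ hζ
    simp only [g]
    rw [norm_smul, Complex.norm_exp, dslope_of_ne _ hζ, slope_def_module, norm_smul, norm_inv, sub_zero]
    simp only [Complex.mul_re, Complex.ofReal_re, Complex.ofReal_im, zero_mul, sub_zero]
    rw [← hz]; field_simp
  have hsub : closedBall (0:ℂ) (1/2) ⊆ ball 0 1 := closedBall_subset_ball (by norm_num)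
  let S : Set ℂ := closedBall 0 (1/2) ∩ φ ⁻¹' (closedBall z r2)
  have hSc : IsCompact S := by
    refine (isCompact_closedBall (0:ℂ) (1/2)).of_isClosed_subset ?_ inter_subset_left
    exact (hφ.continuousOn.mono hsub).preimage_isClosed_of_isClosed isClosed_closedBall isClosed_closedBall
  have hSs : S ⊆ ball 0 1 := fun x hx => hsub hx.1
  have h0S : (0:ℂ) ∈ S := ⟨by simp, by simp [hz, hr2p.le]⟩
  have hgc : ContinuousOn (fun ζ => ‖g ζ‖) S := (hg.continuousOn.mono hSs).norm
  obtain ⟨ζ0, hζ0, hmax⟩ := hSc.exists_isMaxOn ⟨0, h0S⟩ hgc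
  let T : Set ℂ := S ∩ (fun ζ => ‖g ζ‖) ⁻¹' {‖g ζ0‖}
  have hTc : IsCompact T := by
    refine hSc.of_isClosed_subset ?_ inter_subset_left
    exact hgc.preimage_isClosed_of_isClosed hSc.isClosed isClosed_singleton
  obtain ⟨ζ1, hζ1, hmax1⟩ := hTc.exists_isMaxOn ⟨ζ0, hζ0, rfl⟩ (continuous_norm.continuousOn)
  have hζ1S := hζ1.1
  have hg1 : ‖g ζ1‖ = ‖g ζ0‖ := hζ1.2
  have hmaxS : ∀ ζ ∈ S, ‖g ζ‖ ≤ ‖g ζ1‖ := fun ζ hζ => by rw [hg1]; exact hmax hζ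
  have hSball : ∀ ζ ∈ S, φ ζ ∈ ball p R := by
    intro ζ hζ
    have := hζ.2
    rw [mem_preimage, mem_closedBall, dist_eq_norm] at this
    rw [mem_ball, dist_eq_norm]
    calc ‖φ ζ - p‖ = ‖(φ ζ - z) + (z - p)‖ := by congr 1; abel
      _ ≤ ‖φ ζ - z‖ + ‖z - p‖ := norm_add_le _ _
      _ < R := by linarith
  have hnorm1 : ‖ζ1‖ = 1/2 := by
    by_contra hne
    have hlt : ‖ζ1‖ < 1/2 := lt_of_le_of_ne (by simpa using hζ1S.1) hne
    have hle : ‖φ ζ1 - z‖ ≤ r2 := by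
      have := hζ1S.2; rwa [mem_preimage, mem_closedBall, dist_eq_norm] at this
    rcases hle.eq_or_lt with heq | hlt2
    · have hζne : ζ1 ≠ 0 := by
        rintro rfl
        rw [← hz] at heq; simp at heq; linarith
      have hcont : ContinuousOn (fun t : ℝ => ‖φ (t * ζ1) - z‖) (Icc 0 1) := by
        refine ContinuousOn.norm (ContinuousOn.sub ?_ continuousOn_const)
        refine hφ.continuousOn.comp (by fun_prop) ?_
        intro t ht
        rw [mem_ball, dist_zero_right, norm_mul, Complex.norm_real, Real.norm_eq_abs, abs_of_nonneg ht.1]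
        linarith [mul_le_mul_of_nonneg_right ht.2 (norm_nonneg ζ1)]
      have hivt := intermediate_value_Icc (zero_le_one' ℝ) hcont
      have : r1 ∈ Icc (‖φ ((0:ℝ) * ζ1) - z‖) (‖φ ((1:ℝ) * ζ1) - z‖) := by
        simp only [Complex.ofReal_zero, zero_mul, Complex.ofReal_one, one_mul, heq, ← hz]
        simp; constructor <;> linarith
      obtain ⟨t, ht, htr⟩ := hivt this
      simp only at htr
      have ht0 : 0 < t := by
        rcases ht.1.eq_or_lt with h | h
        · rw [← h] at htr; simp [← hz] at htr; linarith
        · exact h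
      have hn : ‖(t:ℂ) * ζ1‖ = t * ‖ζ1‖ := by
        rw [norm_mul, Complex.norm_real, Real.norm_eq_abs, abs_of_pos ht0]
      have hζp : 0 < ‖ζ1‖ := norm_pos_iff.2 hζne
      have htS : (t:ℂ) * ζ1 ∈ S := by
        refine ⟨?_, ?_⟩
        · rw [mem_closedBall, dist_zero_right, hn]; linarith [mul_le_mul_of_nonneg_right ht.2 (norm_nonneg ζ1)]
        · rw [mem_preimage, mem_closedBall, dist_eq_norm, htr]; linarith
      have h3 := hmaxS _ htS
      have htne : (t:ℂ) * ζ1 ≠ 0 := mul_ne_zero (by exact_mod_cast ht0.ne') hζne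
      rw [hgn _ htne, hgn _ hζne, htr, heq, hn] at h3
      -- real part bounds
      have hb1 : -(k * r2 ^ 2 / 8) ≤ (h (φ (t * ζ1))).re := by
        have a1 := h2 _ (hSball _ htS)
        have a2 := (abs_le.1 (Complex.abs_re_le_norm (h (φ (t * ζ1))))).1
        have a3 : ‖φ (t * ζ1) - p‖ ≤ 2 * r1 := by
          calc ‖φ (t * ζ1) - p‖ = ‖(φ (t * ζ1) - z) + (z - p)‖ := by congr 1; abel
            _ ≤ ‖φ (t * ζ1) - z‖ + ‖z - p‖ := norm_add_le _ _
            _ ≤ 2 * r1 := by linarith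
        linarith [mul_le_mul_of_nonneg_left a3 hK.le]
      have hb2 : (h (φ ζ1)).re ≤ -(k * r2 ^ 2 / 4) := by
        have a1 := h1 _ (hmap (hSs hζ1S)) (hSball _ hζ1S)
        have a3 : r2 / 2 ≤ ‖φ ζ1 - p‖ := by
          have : ‖φ ζ1 - z‖ ≤ ‖φ ζ1 - p‖ + ‖z - p‖ := by
            rw [show φ ζ1 - z = (φ ζ1 - p) - (z - p) by abel]; exact norm_sub_le _ _
          linarith
        have a4 : (r2 / 2) ^ 2 ≤ ‖φ ζ1 - p‖ ^ 2 := by gcongr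
        linarith [mul_le_mul_of_nonneg_left a4 hk.le]
      have hc1 : r1 * Real.exp (A * -(k * r2 ^ 2 / 8)) / ‖ζ1‖
          ≤ r1 * Real.exp (A * (h (φ (t * ζ1))).re) / (t * ‖ζ1‖) := by
        gcongr
        linarith [mul_le_mul_of_nonneg_right ht.2 (norm_nonneg ζ1)]
      have hc2 : r2 * Real.exp (A * (h (φ ζ1)).re) / ‖ζ1‖ ≤
          r2 * Real.exp (A * -(k * r2 ^ 2 / 4)) / ‖ζ1‖ := by gcongr
      have hc3 : r2 * Real.exp (A * -(k * r2 ^ 2 / 4)) / ‖ζ1‖ <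
        r1 * Real.exp (A * -(k * r2 ^ 2 / 8)) / ‖ζ1‖ := by gcongr
      linarith
    · have hζb := hSs hζ1S
      have hnear : ∀ᶠ ζ in 𝓝 ζ1, ζ ∈ S := by
        have c1 : ∀ᶠ ζ in 𝓝 ζ1, ζ ∈ closedBall (0:ℂ) (1/2) :=
          mem_of_superset (isOpen_ball.mem_nhds (by simpa using hlt)) ball_subset_closedBall
        have c2 : ContinuousAt φ ζ1 := (hφ.differentiableAt (hopen.mem_nhds hζb)).continuousAt
        have c3 : ∀ᶠ ζ in 𝓝 ζ1, φ ζ ∈ ball z r2 :=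
          c2.eventually (isOpen_ball.mem_nhds (by rwa [mem_ball, dist_eq_norm]))
        filter_upwards [c1, c3] with ζ a b using ⟨a, ball_subset_closedBall b⟩
      have hlm : IsLocalMax (norm ∘ g) ζ1 := by
        filter_upwards [hnear] with ζ hζ using hmaxS ζ hζ
      have hdiff : ∀ᶠ ζ in 𝓝 ζ1, DifferentiableAt ℂ g ζ := by
        filter_upwards [hopen.mem_nhds hζb] with ζ hζ using hg.differentiableAt (hopen.mem_nhds hζ)
      have hev := Complex.norm_eventually_eq_of_isLocalMax hdiff hlm
      have hcb : closedBall (0:ℂ) ‖ζ1‖ ∈ 𝓝 ζ1 := by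
        filter_upwards [hev, hnear] with ζ a b
        have : ζ ∈ T := ⟨b, by simp [a, hg1]⟩
        simpa using hmax1 this
      have := mem_interior_iff_mem_nhds.2 hcb
      rw [interior_closedBall'] at this
      simp at this
  have hζ1ne : ζ1 ≠ 0 := by intro h; rw [h] at hnorm1; norm_num at hnorm1
  have hfin := hmaxS 0 h0S
  rw [hgn _ hζ1ne, hnorm1] at hfin
  have hle : ‖φ ζ1 - z‖ ≤ r2 := by
    have := hζ1S.2; rwa [mem_preimage, mem_closedBall, dist_eq_norm] at this
  have hre : (h (φ ζ1)).re ≤ 0 := by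
    have := h1 _ (hmap (hSs hζ1S)) (hSball _ hζ1S)
    linarith [mul_nonneg hk.le (sq_nonneg ‖φ ζ1 - p‖)]
  have hexp1 : Real.exp (A * (h (φ ζ1)).re) ≤ 1 := by
    rw [Real.exp_le_one_iff]; exact mul_nonpos_of_nonneg_of_nonpos hAp.le hre
  have hg0 : ‖g 0‖ = Real.exp (A * (h z).re) * ‖deriv φ 0‖ := by
    simp only [g]
    rw [norm_smul, Complex.norm_exp, dslope_same]
    simp [hz]
  have hlow : -(K * r1) ≤ (h z).re := by
    have a1 := h2 _ (hSball _ h0S)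
    have a2 := (abs_le.1 (Complex.abs_re_le_norm (h z))).1
    rw [← hz] at a1
    nlinarith
  have hu : ‖φ ζ1 - z‖ * Real.exp (A * (h (φ ζ1)).re) / (1/2) ≤ 2 * r2 := by
    have : ‖φ ζ1 - z‖ * Real.exp (A * (h (φ ζ1)).re) ≤ r2 * 1 := by gcongr
    linarith
  have hel : Real.exp (-(A * (K * r1))) ≤ Real.exp (A * (h z).re) := by
    rw [Real.exp_le_exp]; linarith [mul_le_mul_of_nonneg_left hlow hAp.le]
  have : Real.exp (-(A * (K * r1))) * ‖deriv φ 0‖ ≤ 2 * r2 := by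
    calc _ ≤ Real.exp (A * (h z).re) * ‖deriv φ 0‖ := by gcongr
      _ ≤ _ := by rw [← hg0]; linarith
  rw [Real.exp_neg, inv_mul_le_iff₀ (Real.exp_pos _)] at this
  linarith

theorem disc_localize {E : Type*} [NormedAddCommGroup E] [NormedSpace ℂ E] [CompleteSpace E]
    (Ω : Set E) (p : E) (h : E → ℂ) (hh : Differentiable ℂ h) (R k K : ℝ) (hR : 0 < R) (hk : 0 < k)
    (hK : 0 < K) (h1 : ∀ w ∈ Ω, w ∈ ball p R → (h w).re ≤ -k * ‖w - p‖ ^ 2)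
    (h2 : ∀ w ∈ ball p R, ‖h w‖ ≤ K * ‖w - p‖) (s R0 : ℝ) (hs0 : 0 < s) (hs : s < 1) (hR0 : 0 < R0) :
    ∃ V > 0, ∀ φ : ℂ → E, DifferentiableOn ℂ φ (ball 0 1) → MapsTo φ (ball 0 1) Ω →
      φ 0 ∈ ball p V → ∀ ζ ∈ closedBall (0:ℂ) s, φ ζ ∈ ball p R0 := by
  obtain ⟨R', hR', B, hB, hD⟩ := disc_deriv_bound Ω p h hh R k K hR hk hK h1 h2
  obtain ⟨R1, hR1, hR1a, hR1b, hR1c⟩ : ∃ R1 > 0, R1 < R0 ∧ R1 < R ∧ R1 < R' := by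
    refine ⟨min R0 (min R R') / 2, by positivity, ?_, ?_, ?_⟩
    · have : min R0 (min R R') ≤ R0 := min_le_left _ _
      have : 0 < min R0 (min R R') := by positivity
      linarith
    · have : min R0 (min R R') ≤ R := (min_le_right _ _).trans (min_le_left _ _)
      linarith
    · have : min R0 (min R R') ≤ R' := (min_le_right _ _).trans (min_le_right _ _)
      linarith
  have hs1 : 0 < 1 - s := by linarith
  obtain ⟨κ, hκ0, hκ1, hκ2⟩ : ∃ κ > 0, κ < 1 ∧ B / (1 - s) * κ < R1 / 2 := by
    refine ⟨min (1/2) (R1 / (4 * (B / (1 - s)))), by positivity, ?_, ?_⟩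
    · exact (min_le_left _ _).trans_lt (by norm_num)
    · have h3 : min (1/2) (R1 / (4 * (B / (1 - s)))) ≤ R1 / (4 * (B / (1 - s))) := min_le_right _ _
      have h4 : 0 < B / (1 - s) := by positivity
      rw [le_div_iff₀ (by positivity)] at h3
      linarith
  obtain ⟨V, hV0, hV1, hV2⟩ : ∃ V > 0, V < R1 ∧ K * V * (1 + 2 / κ) < k * (R1 / 2) ^ 2 := by
    refine ⟨min (R1/2) (k * (R1 / 2) ^ 2 / (2 * (K * (1 + 2 / κ)))), by positivity, ?_, ?_⟩
    · exact (min_le_left _ _).trans_lt (by linarith)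
    · set V := min (R1/2) (k * (R1 / 2) ^ 2 / (2 * (K * (1 + 2 / κ)))) with hVd
      have h3 : V ≤ k * (R1 / 2) ^ 2 / (2 * (K * (1 + 2 / κ))) := min_le_right _ _
      have h4 : 0 < K * (1 + 2 / κ) := by positivity
      rw [le_div_iff₀ (by positivity)] at h3
      have : 0 < V := by positivity
      have : 0 < k * (R1 / 2) ^ 2 := by positivity
      linarith
  refine ⟨V, hV0, fun φ hφ hmap hz => ?_⟩
  have hsub : closedBall (0:ℂ) s ⊆ ball 0 1 := closedBall_subset_ball hs
  have hda : ∀ ζ ∈ ball (0:ℂ) 1, DifferentiableAt ℂ φ ζ := fun ζ hζ =>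
    hφ.differentiableAt (isOpen_ball.mem_nhds hζ)
  -- derivative bound
  have hder : ∀ ζ ∈ closedBall (0:ℂ) s, φ ζ ∈ ball p R' → ‖deriv φ ζ‖ ≤ B / (1 - s) := by
    intro ζ hζ hζR
    have hζn : ‖ζ‖ ≤ s := by simpa using hζ
    have haff : MapsTo (fun w : ℂ => ζ + ((1 - s : ℝ) : ℂ) * w) (ball 0 1) (ball 0 1) := by
      intro w hw
      have hw' : ‖w‖ < 1 := by simpa using hw
      rw [mem_ball_zero_iff]
      calc ‖ζ + ((1 - s : ℝ) : ℂ) * w‖ ≤ ‖ζ‖ + ‖((1 - s : ℝ) : ℂ) * w‖ := norm_add_le _ _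
        _ = ‖ζ‖ + (1 - s) * ‖w‖ := by rw [norm_mul, Complex.norm_real, Real.norm_of_nonneg hs1.le]
        _ < 1 := by nlinarith
    have := hD (fun w => φ (ζ + ((1 - s : ℝ) : ℂ) * w)) (hφ.comp (by fun_prop) haff)
      (hmap.comp haff) (by simpa using hζR)
    have hd : HasDerivAt (fun w => φ (ζ + ((1 - s : ℝ) : ℂ) * w)) (((1 - s : ℝ) : ℂ) • deriv φ ζ) 0 := by
      have e1 : HasDerivAt (fun w : ℂ => ζ + ((1 - s : ℝ) : ℂ) * w) ((1 - s : ℝ) : ℂ) 0 := by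
        simpa using ((hasDerivAt_id (0:ℂ)).const_mul ((1 - s : ℝ) : ℂ)).const_add ζ
      have e2 : HasDerivAt φ (deriv φ ζ) (ζ + ((1 - s : ℝ) : ℂ) * 0) := by
        simpa using (hda ζ (hsub hζ)).hasDerivAt
      exact HasDerivAt.scomp (0:ℂ) e2 e1
    rw [hd.deriv, norm_smul, Complex.norm_real, Real.norm_of_nonneg hs1.le] at this
    rw [le_div_iff₀ hs1]; linarith
  suffices H : ∀ ζ ∈ closedBall (0:ℂ) s, ‖φ ζ - p‖ < R1 by
    intro ζ hζ
    rw [mem_ball, dist_eq_norm]; exact (H ζ hζ).trans hR1a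
  by_contra! hcon
  obtain ⟨ζ', hζ', hζ'R⟩ := hcon
  have hcont : ContinuousOn (fun ζ => ‖φ ζ - p‖) (closedBall (0:ℂ) s) :=
    ((hφ.continuousOn.mono hsub).sub continuousOn_const).norm
  have hcl : IsClosed (closedBall (0:ℂ) s ∩ (fun ζ => ‖φ ζ - p‖) ⁻¹' Ici R1) :=
    hcont.preimage_isClosed_of_isClosed isClosed_closedBall isClosed_Ici
  have hcpt : IsCompact (closedBall (0:ℂ) s ∩ (fun ζ => ‖φ ζ - p‖) ⁻¹' Ici R1) :=
    (isCompact_closedBall (0:ℂ) s).of_isClosed_subset hcl inter_subset_left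
  obtain ⟨a, ⟨ha1, ha2⟩, hamin⟩ := hcpt.exists_isMinOn ⟨ζ', hζ', hζ'R⟩ continuous_norm.continuousOn
  have ha1' : ‖a‖ ≤ s := by simpa using ha1
  simp only [mem_preimage, mem_Ici] at ha2
  have hz' : ‖φ 0 - p‖ < V := by rwa [mem_ball, dist_eq_norm] at hz
  have ha0 : a ≠ 0 := by rintro rfl; linarith
  have han : 0 < ‖a‖ := norm_pos_iff.2 ha0
  have hin : ∀ ζ ∈ ball (0:ℂ) ‖a‖, ‖φ ζ - p‖ < R1 := by
    intro ζ hζ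
    have hζ2 : ‖ζ‖ < ‖a‖ := by simpa using hζ
    by_contra! hc
    have := hamin ⟨by simp; linarith, hc⟩
    simp at this; linarith
  have hsub2 : closedBall (0:ℂ) ‖a‖ ⊆ closedBall 0 s := closedBall_subset_closedBall ha1'
  have hin2 : ∀ ζ ∈ closedBall (0:ℂ) ‖a‖, ‖φ ζ - p‖ ≤ R1 := by
    have hcl2 : IsClosed (closedBall (0:ℂ) s ∩ (fun ζ => ‖φ ζ - p‖) ⁻¹' Iic R1) :=
      hcont.preimage_isClosed_of_isClosed isClosed_closedBall isClosed_Iic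
    have : closure (ball (0:ℂ) ‖a‖) ⊆ closedBall (0:ℂ) s ∩ (fun ζ => ‖φ ζ - p‖) ⁻¹' Iic R1 :=
      closure_minimal (fun ζ hζ => ⟨hsub2 (ball_subset_closedBall hζ), (hin ζ hζ).le⟩) hcl2
    rw [closure_ball _ han.ne'] at this
    exact fun ζ hζ => (this hζ).2
  set b : ℂ := ((1 - κ : ℝ) : ℂ) * a with hb
  have hbn : ‖b‖ = (1 - κ) * ‖a‖ := by
    rw [hb, norm_mul, Complex.norm_real, Real.norm_of_nonneg (by linarith)]
  have hbball : b ∈ ball (0:ℂ) ‖a‖ := by rw [mem_ball_zero_iff, hbn]; nlinarith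
  have hmv : ‖φ a - φ b‖ ≤ B / (1 - s) * ‖a - b‖ := by
    refine (convex_closedBall (0:ℂ) ‖a‖).norm_image_sub_le_of_norm_deriv_le
      (fun x hx => hda x (hsub (hsub2 hx))) (fun x hx => hder x (hsub2 hx) ?_)
      (ball_subset_closedBall hbball) (by simp)
    rw [mem_ball, dist_eq_norm]; exact (hin2 x hx).trans_lt hR1c
  have hab : ‖a - b‖ ≤ κ := by
    have : a - b = (κ : ℂ) * a := by rw [hb]; push_cast; ring
    rw [this, norm_mul, Complex.norm_real, Real.norm_of_nonneg hκ0.le]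
    nlinarith
  have hinB : ∀ ζ ∈ ball (0:ℂ) ‖a‖, φ ζ ∈ ball p R := fun ζ hζ => by
    rw [mem_ball, dist_eq_norm]; exact (hin ζ hζ).trans hR1b
  have hz2 : ‖h (φ 0)‖ < K * V := by
    refine (h2 _ (hinB 0 (by simpa using ha0))).trans_lt ?_
    nlinarith
  have hBC : ‖h (φ b) - h (φ 0)‖ ≤ 2 * (K * V) * ‖b‖ / (‖a‖ - ‖b‖) := by
    refine Complex.borelCaratheodory_zero (f := fun ζ => h (φ ζ) - h (φ 0)) (M := K * V) (R := ‖a‖) (z := b) (by positivity) ?_ ?_ han hbball (by simp)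
    · exact (hh.comp_differentiableOn (hφ.mono (ball_subset_closedBall.trans (hsub2.trans hsub)))).sub_const _
    · intro ζ hζ
      have e1 := h1 (φ ζ) (hmap (hsub (hsub2 (ball_subset_closedBall hζ)))) (hinB ζ hζ)
      have e2 := (abs_le.1 (Complex.abs_re_le_norm (h (φ 0)))).1
      have e3 : 0 ≤ k * ‖φ ζ - p‖ ^ 2 := by positivity
      simp only [mem_ofPred_eq, Complex.sub_re]
      linarith
  have hBC2 : 2 * (K * V) * ‖b‖ / (‖a‖ - ‖b‖) ≤ K * V * (2 / κ) := by
    rw [hbn]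
    have : ‖a‖ - (1 - κ) * ‖a‖ = κ * ‖a‖ := by ring
    rw [this, div_le_iff₀ (by positivity)]
    have : K * V * (2 / κ) * (κ * ‖a‖) = 2 * (K * V) * ‖a‖ := by field_simp
    rw [this]
    have : 0 < K * V * ‖a‖ := by positivity
    nlinarith
  have hfin : k * ‖φ b - p‖ ^ 2 < k * (R1 / 2) ^ 2 := by
    have e1 := h1 (φ b) (hmap (hsub (hsub2 (ball_subset_closedBall hbball)))) (hinB b hbball)
    have e2 := (abs_le.1 (Complex.abs_re_le_norm (h (φ b)))).1
    have e3 : ‖h (φ b)‖ ≤ ‖h (φ b) - h (φ 0)‖ + ‖h (φ 0)‖ := by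
      simpa using norm_add_le (h (φ b) - h (φ 0)) (h (φ 0))
    linarith
  have hfin2 : ‖φ b - p‖ < R1 / 2 := by
    have := lt_of_mul_lt_mul_left hfin hk.le
    exact lt_of_pow_lt_pow_left₀ 2 (by positivity) this
  have htri : ‖φ a - p‖ ≤ ‖φ a - φ b‖ + ‖φ b - p‖ := by
    simpa using norm_add_le (φ a - φ b) (φ b - p)
  have : B / (1 - s) * ‖a - b‖ ≤ B / (1 - s) * κ := by gcongr
  linarith

structure LocData {E : Type*} [NormedAddCommGroup E] [NormedSpace ℂ E] (Ω : Set E) (p : E)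
    (r : E → ℝ) (a : E → E →L[ℂ] ℂ) (S : E →L[ℂ] E →L[ℂ] ℂ) (L : E → ℝ) (c C : ℝ) : Prop where
  dom : ∀ᶠ z in 𝓝 p, z ∈ Ω ↔ r z < 0
  rp : r p = 0
  rc : ContinuousAt r p
  ac : ContinuousAt a p
  ap : a p ≠ 0
  cpos : 0 < c
  Cpos : 0 < C
  Llow : ∀ w, c * ‖w‖ ^ 2 ≤ L w
  Lup : ∀ w, L w ≤ C * ‖w‖ ^ 2
  Lsm : ∀ (m : ℂ) w, L (m • w) = ‖m‖ ^ 2 * L w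
  Lfun : ∀ X, ∃ l : E →L[ℂ] ℂ, l X = (Real.sqrt (L X) : ℂ) ∧ ∀ w, ‖l w‖ ^ 2 ≤ L w
  taylor : ∀ ε > 0, ∃ ρ > 0, ∀ z ∈ ball p ρ, ∀ w ∈ ball p ρ,
    |r w - r z - 2 * (a z (w - z)).re - (S (w - z) (w - z)).re - L (w - z)| ≤ ε * ‖w - z‖ ^ 2

theorem siegel_schwarz (u v : ℂ → ℂ) (hu : DifferentiableOn ℂ u (ball 0 1))
    (hv : DifferentiableOn ℂ v (ball 0 1)) (hu0 : u 0 = 0) (hv0 : v 0 = 0)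
    (h : ∀ ζ ∈ ball (0:ℂ) 1, ‖v ζ‖ ^ 2 ≤ 1 - 2 * (u ζ).re) :
    ‖deriv u 0‖ ^ 2 + ‖deriv v 0‖ ^ 2 ≤ 1 := by
  set x := deriv u 0 with hx
  set y := deriv v 0 with hy
  set T := ‖x‖ ^ 2 + ‖y‖ ^ 2 with hT
  have hT0 : 0 ≤ T := by positivity
  have hne : ∀ ζ ∈ ball (0:ℂ) 1, 1 - u ζ ≠ 0 := by
    intro ζ hζ h0
    have h1 := h ζ hζ
    have : u ζ = 1 := by linear_combination -h0
    rw [this] at h1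
    norm_num at h1
    linarith [sq_nonneg ‖v ζ‖]
  let F : ℂ → ℂ := fun ζ => ((starRingEnd ℂ) x * u ζ + (starRingEnd ℂ) y * v ζ) / (1 - u ζ)
  have hF : DifferentiableOn ℂ F (ball 0 1) :=
    ((hu.const_mul _).add (hv.const_mul _)).div (hu.const_sub 1) hne
  have hF0 : F 0 = 0 := by simp [F, hu0, hv0]
  have hFb : MapsTo F (ball 0 1) (closedBall (F 0) (Real.sqrt T)) := by
    intro ζ hζ
    rw [hF0, mem_closedBall_zero_iff]
    apply Real.le_sqrt_of_sq_le
    simp only [F]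
    rw [norm_div, div_pow, div_le_iff₀ (by have := norm_pos_iff.2 (hne ζ hζ); positivity)]
    have e1 : ‖(starRingEnd ℂ) x * u ζ + (starRingEnd ℂ) y * v ζ‖ ≤ ‖x‖ * ‖u ζ‖ + ‖y‖ * ‖v ζ‖ := by
      refine (norm_add_le _ _).trans ?_
      simp
    have e2 : ‖1 - u ζ‖ ^ 2 = 1 - 2 * (u ζ).re + ‖u ζ‖ ^ 2 := by
      rw [← Complex.normSq_eq_norm_sq, ← Complex.normSq_eq_norm_sq, Complex.normSq_sub]
      simp; ring
    have e3 : ‖(starRingEnd ℂ) x * u ζ + (starRingEnd ℂ) y * v ζ‖ ^ 2 ≤ (‖x‖ * ‖u ζ‖ + ‖y‖ * ‖v ζ‖) ^ 2 := by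
      gcongr
    have e4 : (‖x‖ * ‖u ζ‖ + ‖y‖ * ‖v ζ‖) ^ 2 ≤ T * (‖u ζ‖ ^ 2 + ‖v ζ‖ ^ 2) := by
      linarith [sq_nonneg (‖x‖ * ‖v ζ‖ - ‖y‖ * ‖u ζ‖)]
    have e5 : T * (‖u ζ‖ ^ 2 + ‖v ζ‖ ^ 2) ≤ T * ‖1 - u ζ‖ ^ 2 := by
      apply mul_le_mul_of_nonneg_left _ hT0
      rw [e2]; linarith [h ζ hζ]
    linarith
  have hder := Complex.norm_deriv_le_div_of_mapsTo_ball hF hFb one_pos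
  have hmem : (0:ℂ) ∈ ball (0:ℂ) 1 := by simp
  have hdu : HasDerivAt u x 0 := (hu.differentiableAt (isOpen_ball.mem_nhds hmem)).hasDerivAt
  have hdv : HasDerivAt v y 0 := (hv.differentiableAt (isOpen_ball.mem_nhds hmem)).hasDerivAt
  have hdF : HasDerivAt F ((T : ℝ) : ℂ) 0 := by
    have := ((hdu.const_mul ((starRingEnd ℂ) x)).add (hdv.const_mul ((starRingEnd ℂ) y))).div
      (hdu.const_sub 1) (hne 0 hmem)
    refine this.congr_deriv ?_
    simp [hu0, hv0, hT, ← Complex.normSq_eq_norm_sq, Complex.normSq_eq_conj_mul_self]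
  rw [hdF.deriv, Complex.norm_real, Real.norm_of_nonneg hT0, div_one] at hder
  by_contra! hc
  have h1 : Real.sqrt T * Real.sqrt T = T := Real.mul_self_sqrt hT0
  have h2 : 1 < Real.sqrt T := by rw [Real.lt_sqrt (by norm_num)]; linarith
  nlinarith

theorem LocData.exists_R {E : Type*} [NormedAddCommGroup E] [NormedSpace ℂ E] {Ω : Set E} {p : E}
    {r : E → ℝ} {a : E → E →L[ℂ] ℂ} {S : E →L[ℂ] E →L[ℂ] ℂ} {L : E → ℝ} {c C : ℝ} (H : LocData Ω p r a S L c C) : ∃ R > 0, ∀ z ∈ ball p R, (z ∈ Ω ↔ r z < 0) := by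
  obtain ⟨R, hR, h⟩ := Metric.eventually_nhds_iff_ball.1 H.dom
  exact ⟨R, hR, h⟩

section
variable {E : Type*} [NormedAddCommGroup E] [NormedSpace ℂ E] [CompleteSpace E] {Ω : Set E} {p : E}
    {r : E → ℝ} {a : E → E →L[ℂ] ℂ} {S : E →L[ℂ] E →L[ℂ] ℂ} {L : E → ℝ} {c C : ℝ}

theorem LocData.localize (H : LocData Ω p r a S L c C) (s R0 : ℝ) (hs0 : 0 < s) (hs : s < 1) (hR0 : 0 < R0) :
    ∃ V > 0, ∀ φ : ℂ → E, DifferentiableOn ℂ φ (ball 0 1) → MapsTo φ (ball 0 1) Ω →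
      φ 0 ∈ ball p V → ∀ ζ ∈ closedBall (0:ℂ) s, φ ζ ∈ ball p R0 := by
  obtain ⟨R1, hR1, hdom⟩ := H.exists_R
  have hc := H.cpos
  obtain ⟨R2, hR2, htay⟩ := H.taylor (c / 2) (by positivity)
  let R := min R1 (min R2 1)
  have hR : 0 < R := by positivity
  have hr1 : R ≤ R1 := min_le_left _ _
  have hr2 : R ≤ R2 := (min_le_right _ _).trans (min_le_left _ _)
  have hr3 : R ≤ 1 := (min_le_right _ _).trans (min_le_right _ _)
  refine disc_localize Ω p (fun w => 2 * a p (w - p) + S (w - p) (w - p)) ?_ R (c / 2)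
    (2 * ‖a p‖ + ‖S‖ + 1) hR (by positivity) (by positivity) ?_ ?_ s R0 hs0 hs hR0
  · have h1 : Differentiable ℂ (fun w => w - p) := by fun_prop
    have h2 : Differentiable ℂ (fun w => a p (w - p)) := (a p).differentiable.comp h1
    have h3 : Differentiable ℂ (fun w => S (w - p)) := S.differentiable.comp h1
    exact (h2.const_mul 2).add (h3.clm_apply h1)
  · intro w hw hwR
    have e1 := htay p (mem_ball_self hR2) w (ball_subset_ball hr2 hwR)
    have e2 := (hdom w (ball_subset_ball hr1 hwR)).1 hw
    have e3 := H.Llow (w - p)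
    rw [H.rp] at e1
    have e4 := (abs_le.1 e1).1
    simp only [Complex.add_re, Complex.mul_re, Complex.re_ofNat, Complex.im_ofNat, zero_mul, sub_zero]
    linarith
  · intro w hw
    rw [mem_ball, dist_eq_norm] at hw
    have e1 : ‖a p (w - p)‖ ≤ ‖a p‖ * ‖w - p‖ := (a p).le_opNorm _
    have e2 : ‖S (w - p) (w - p)‖ ≤ ‖S‖ * ‖w - p‖ * ‖w - p‖ := S.le_opNorm₂ _ _
    have e3 : ‖S‖ * ‖w - p‖ * ‖w - p‖ ≤ ‖S‖ * ‖w - p‖ * 1 := by gcongr; linarith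
    have e4 : ‖2 * a p (w - p) + S (w - p) (w - p)‖ ≤ 2 * ‖a p (w - p)‖ + ‖S (w - p) (w - p)‖ := by
      refine (norm_add_le _ _).trans ?_
      simp
    have := norm_nonneg (w - p)
    show ‖2 * a p (w - p) + S (w - p) (w - p)‖ ≤ _
    linarith

theorem LocData.lower (H : LocData Ω p r a S L c C) (s θ : ℝ) (hs0 : 0 < s) (hs : s < 1)
    (hθ0 : 0 < θ) (hθ : θ < 1) :
    ∃ V > 0, ∀ φ : ℂ → E, DifferentiableOn ℂ φ (ball 0 1) → MapsTo φ (ball 0 1) Ω →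
      φ 0 ∈ ball p V →
      s ^ 2 * (‖a (φ 0) (deriv φ 0)‖ ^ 2 / (- r (φ 0)) ^ 2 + θ * (L (deriv φ 0) / (- r (φ 0)))) ≤ 1 := by
  obtain ⟨R1, hR1, hdom⟩ := H.exists_R
  have hc := H.cpos
  obtain ⟨R2, hR2, htay⟩ := H.taylor ((1 - θ) * c) (mul_pos (by linarith) hc)
  let R := min R1 R2
  have hR : 0 < R := by positivity
  have hr1 : R ≤ R1 := min_le_left _ _
  have hr2 : R ≤ R2 := min_le_right _ _
  obtain ⟨V, hV, hloc⟩ := H.localize s R hs0 hs hR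
  refine ⟨V, hV, fun φ hφ hmap hz => ?_⟩
  have hloc := hloc φ hφ hmap hz
  have h0s : (0:ℂ) ∈ closedBall (0:ℂ) s := by simp [hs0.le]
  have hzR := hloc 0 h0s
  set z := φ 0 with hzdef
  have hzΩ : z ∈ Ω := hmap (by simp)
  have hδ : 0 < - r z := by have := (hdom z (ball_subset_ball hr1 hzR)).1 hzΩ; linarith
  set δ := - r z with hδdef
  set Y := deriv φ 0 with hY
  have hsc : ∀ ζ ∈ ball (0:ℂ) 1, (s:ℂ) * ζ ∈ closedBall (0:ℂ) s := by
    intro ζ hζ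
    have hζ' : ‖ζ‖ < 1 := by simpa using hζ
    rw [mem_closedBall_zero_iff, norm_mul, Complex.norm_real, Real.norm_of_nonneg hs0.le]
    nlinarith
  have hsub : closedBall (0:ℂ) s ⊆ ball 0 1 := closedBall_subset_ball hs
  let w : ℂ → E := fun ζ => φ ((s:ℂ) * ζ) - z
  have hw : DifferentiableOn ℂ w (ball 0 1) :=
    (hφ.comp (by fun_prop) (fun ζ hζ => hsub (hsc ζ hζ))).sub_const _
  have hw0 : w 0 = 0 := by simp [w, hzdef]
  have hdw : HasDerivAt w ((s:ℂ) • Y) 0 := by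
    have e1 : HasDerivAt (fun w : ℂ => (s : ℂ) * w) (s : ℂ) 0 := by
      simpa using ((hasDerivAt_id (0:ℂ)).const_mul (s : ℂ))
    have e2 : HasDerivAt φ Y ((s:ℂ) * 0) := by
      rw [mul_zero]
      exact (hφ.differentiableAt (isOpen_ball.mem_nhds (by simp))).hasDerivAt
    exact (HasDerivAt.scomp (0:ℂ) e2 e1).sub_const _
  obtain ⟨l, hl1, hl2⟩ := H.Lfun Y
  let u : ℂ → ℂ := fun ζ => (a z (w ζ) + S (w ζ) (w ζ) / 2) / δ
  let v : ℂ → ℂ := fun ζ => (Real.sqrt (θ / δ) : ℂ) * l (w ζ)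
  have hu : DifferentiableOn ℂ u (ball 0 1) := by
    have h2 : DifferentiableOn ℂ (fun ζ => a z (w ζ)) (ball 0 1) := (a z).differentiable.comp_differentiableOn hw
    have h3 : DifferentiableOn ℂ (fun ζ => S (w ζ)) (ball 0 1) := S.differentiable.comp_differentiableOn hw
    exact (h2.add ((h3.clm_apply hw).div_const 2)).div_const _
  have hv : DifferentiableOn ℂ v (ball 0 1) := (l.differentiable.comp_differentiableOn hw).const_mul _
  have hdu : HasDerivAt u ((s:ℂ) * a z Y / δ) 0 := by
    have h2 : HasDerivAt (fun ζ => a z (w ζ)) (a z ((s:ℂ) • Y)) 0 := (a z).hasFDerivAt.comp_hasDerivAt 0 hdw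
    have h3 : HasDerivAt (fun ζ => S (w ζ)) (S ((s:ℂ) • Y)) 0 := S.hasFDerivAt.comp_hasDerivAt 0 hdw
    have h4 := (h2.add ((h3.clm_apply hdw).div_const 2)).div_const (δ:ℂ)
    refine h4.congr_deriv ?_
    simp [hw0]
  have hdv : HasDerivAt v ((Real.sqrt (θ / δ) : ℂ) * ((s:ℂ) * Real.sqrt (L Y))) 0 := by
    have h2 : HasDerivAt (fun ζ => l (w ζ)) (l ((s:ℂ) • Y)) 0 := l.hasFDerivAt.comp_hasDerivAt 0 hdw
    refine (h2.const_mul _).congr_deriv ?_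
    rw [map_smul, hl1, smul_eq_mul]
  have key := siegel_schwarz u v hu hv (by simp [u, hw0]) (by simp [v, hw0]) ?_
  · rw [hdu.deriv, hdv.deriv] at key
    simp only [norm_mul, norm_div, Complex.norm_real, Real.norm_of_nonneg hs0.le, Real.norm_of_nonneg hδ.le,
      Real.norm_of_nonneg (Real.sqrt_nonneg _), mul_pow, div_pow] at key
    have hLY : 0 ≤ L Y := le_trans (by positivity) (H.Llow Y)
    rw [Real.sq_sqrt (by positivity), Real.sq_sqrt hLY] at key
    calc _ = s ^ 2 * ‖a z Y‖ ^ 2 / δ ^ 2 + θ / δ * (s ^ 2 * L Y) := by ring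
      _ ≤ 1 := key
  · intro ζ hζ
    have hm := hloc _ (hsc ζ hζ)
    have e1 := (abs_le.1 (htay z (ball_subset_ball hr2 hzR) _ (ball_subset_ball hr2 hm))).1
    have e2 := (hdom _ (ball_subset_ball hr1 hm)).1 (hmap (hsub (hsc ζ hζ)))
    change _ ≤ r (φ (s * ζ)) - r z - 2 * (a z (w ζ)).re - (S (w ζ) (w ζ)).re - L (w ζ) at e1
    change -((1 - θ) * c * ‖w ζ‖ ^ 2) ≤ _ at e1
    have e3 := H.Llow (w ζ)
    have e4 := hl2 (w ζ)
    have e5 : (u ζ).re = ((a z (w ζ)).re + (S (w ζ) (w ζ)).re / 2) / δ := by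
      simp only [u]
      rw [Complex.div_ofReal_re]; simp
    have e6 : ‖v ζ‖ ^ 2 = θ / δ * ‖l (w ζ)‖ ^ 2 := by
      simp only [v]
      rw [norm_mul, mul_pow, Complex.norm_real, Real.norm_of_nonneg (Real.sqrt_nonneg _), Real.sq_sqrt (by positivity)]
    rw [e5, e6]
    have e7 : θ * ‖l (w ζ)‖ ^ 2 ≤ δ - 2 * ((a z (w ζ)).re + (S (w ζ) (w ζ)).re / 2) := by
      nlinarith
    rw [show θ / δ * ‖l (w ζ)‖ ^ 2 = (θ * ‖l (w ζ)‖ ^ 2) / δ by ring,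
      show 1 - 2 * (((a z (w ζ)).re + (S (w ζ) (w ζ)).re / 2) / δ) = (δ - 2 * ((a z (w ζ)).re + (S (w ζ) (w ζ)).re / 2)) / δ by field_simp]
    gcongr
end

theorem moebius_id (x σ : ℂ) (h : 1 + x * σ ≠ 0) :
    1 - 2 * (x * (σ / (1 + x * σ))).re - ‖σ / (1 + x * σ)‖ ^ 2 * (1 - ‖x‖ ^ 2)
      = (1 - ‖σ‖ ^ 2) / ‖1 + x * σ‖ ^ 2 := by
  have hn : Complex.normSq (1 + x * σ) ≠ 0 := by simpa using h
  have e1 : (x * (σ / (1 + x * σ))).re = ((x * σ).re + Complex.normSq (x * σ)) / Complex.normSq (1 + x * σ) := by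
    rw [← mul_div_assoc, Complex.div_re, Complex.normSq_apply (x * σ)]
    simp only [Complex.add_re, Complex.one_re, Complex.add_im, Complex.one_im]
    ring
  have e2 : Complex.normSq (1 + x * σ) = 1 + 2 * (x * σ).re + Complex.normSq (x * σ) := by
    rw [Complex.normSq_add]; simp; ring
  rw [norm_div, div_pow, ← Complex.normSq_eq_norm_sq, ← Complex.normSq_eq_norm_sq, ← Complex.normSq_eq_norm_sq, e1]
  field_simp
  rw [e2, Complex.normSq_mul]
  ring

theorem LocData.Lsub {E : Type*} [NormedAddCommGroup E] [NormedSpace ℂ E] {Ω : Set E} {p : E}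
    {r : E → ℝ} {a : E → E →L[ℂ] ℂ} {S : E →L[ℂ] E →L[ℂ] ℂ} {L : E → ℝ} {c C : ℝ}
    (H : LocData Ω p r a S L c C) (v u : E) :
    L (v + u) ≤ L v + C * (2 * ‖v‖ * ‖u‖ + ‖u‖ ^ 2) := by
  obtain ⟨l, h1, h2⟩ := H.Lfun (v + u)
  have hc := H.cpos
  have hC := H.Cpos
  have hp : ∀ w, 0 ≤ L w := fun w => le_trans (by positivity) (H.Llow w)
  have hn : ∀ w, ‖l w‖ ≤ Real.sqrt (L w) := fun w => Real.le_sqrt_of_sq_le (h2 w)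
  have hs : ∀ w, Real.sqrt (L w) ≤ Real.sqrt C * ‖w‖ := fun w => by
    rw [← Real.sqrt_sq (norm_nonneg w), ← Real.sqrt_mul hC.le]
    exact Real.sqrt_le_sqrt (H.Lup w)
  have e1 : Real.sqrt (L (v + u)) ≤ Real.sqrt (L v) + Real.sqrt C * ‖u‖ := by
    have : ‖l (v + u)‖ = Real.sqrt (L (v + u)) := by
      rw [h1, Complex.norm_real, Real.norm_of_nonneg (Real.sqrt_nonneg _)]
    rw [← this, map_add]
    exact (norm_add_le _ _).trans (add_le_add (hn v) ((hn u).trans (hs u)))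
  have e2 : L (v + u) = Real.sqrt (L (v + u)) ^ 2 := (Real.sq_sqrt (hp _)).symm
  have e3 : L v = Real.sqrt (L v) ^ 2 := (Real.sq_sqrt (hp _)).symm
  have e4 : C = Real.sqrt C ^ 2 := (Real.sq_sqrt hC.le).symm
  have e5 : Real.sqrt (L (v + u)) ^ 2 ≤ (Real.sqrt (L v) + Real.sqrt C * ‖u‖) ^ 2 := by gcongr
  have e6 : Real.sqrt (L v) * (Real.sqrt C * ‖u‖) ≤ (Real.sqrt C * ‖v‖) * (Real.sqrt C * ‖u‖) := by
    gcongr; exact hs v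
  calc L (v + u) = Real.sqrt (L (v + u)) ^ 2 := e2
    _ ≤ (Real.sqrt (L v) + Real.sqrt C * ‖u‖) ^ 2 := e5
    _ ≤ Real.sqrt (L v) ^ 2 + Real.sqrt C ^ 2 * (2 * ‖v‖ * ‖u‖ + ‖u‖ ^ 2) := by linarith
    _ = _ := by rw [← e3, ← e4]

set_option maxHeartbeats 1000000 in
theorem LocData.upper {E : Type*} [NormedAddCommGroup E] [NormedSpace ℂ E] {Ω : Set E} {p : E}
    {r : E → ℝ} {a : E → E →L[ℂ] ℂ} {S : E →L[ℂ] E →L[ℂ] ℂ} {L : E → ℝ} {c C : ℝ}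
    (H : LocData Ω p r a S L c C) (s : ℝ) (hs0 : 0 < s) (hs : s < 1) :
    ∃ V > 0, ∀ z ∈ Ω ∩ ball p V, ∀ X : E, ‖a z X‖ ^ 2 / (- r z) ^ 2 + L X / (- r z) = 1 →
      ∃ φ : ℂ → E, DifferentiableOn ℂ φ (ball 0 1) ∧ MapsTo φ (ball 0 1) Ω ∧ φ 0 = z ∧
        deriv φ 0 = (s : ℂ) • X := by
  obtain ⟨R1, hR1, hdom⟩ := H.exists_R
  have hc := H.cpos
  have hC := H.Cpos
  obtain ⟨N1, hN1⟩ : ∃ N, a p N ≠ 0 := by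
    by_contra! h
    exact H.ap (by ext x; simpa using h x)
  obtain ⟨N0, hN0⟩ : ∃ N, a p N = 1 := ⟨(a p N1)⁻¹ • N1, by simp [hN1]⟩
  have hs1 : 0 < 1 - s := by linarith
  obtain ⟨M, hM⟩ : ∃ M, M = 1 / (1 - s) := ⟨_, rfl⟩
  have hM0 : 0 < M := by rw [hM]; positivity
  obtain ⟨A, hA⟩ : ∃ A, A = M / Real.sqrt c := ⟨_, rfl⟩
  have hA0 : 0 < A := by rw [hA]; positivity
  obtain ⟨B, hB⟩ : ∃ B, B = M ^ 2 * ‖S‖ * ‖N0‖ / (2 * c) := ⟨_, rfl⟩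
  have hB0 : 0 ≤ B := by rw [hB]; positivity
  obtain ⟨K, hK⟩ : ∃ K, K = M ^ 2 * ‖S‖ / c + ‖S‖ * (2 * A * B + B ^ 2) + C * (2 * A * B + B ^ 2) + (A + B) ^ 2 := ⟨_, rfl⟩
  have hK0 : 0 < K := by rw [hK]; positivity
  have hs2 : 0 < 1 - s ^ 2 := by nlinarith
  obtain ⟨ε, hε0, hε1, hε2⟩ : ∃ ε > 0, ε ≤ 1 ∧ ε * K < (1 - s ^ 2) / 4 := by
    refine ⟨min 1 ((1 - s ^ 2) / (8 * K)), by positivity, min_le_left _ _, ?_⟩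
    have : min 1 ((1 - s ^ 2) / (8 * K)) ≤ (1 - s ^ 2) / (8 * K) := min_le_right _ _
    rw [le_div_iff₀ (by positivity)] at this
    linarith
  obtain ⟨R2, hR2, htay⟩ := H.taylor ε hε0
  obtain ⟨R, hR, hr1, hr2⟩ : ∃ R > 0, R ≤ R1 ∧ R ≤ R2 := ⟨min R1 R2, by positivity, min_le_left _ _, min_le_right _ _⟩
  obtain ⟨t0, ht0, ht1, ht2⟩ : ∃ t0 > 0, t0 ≤ ε ∧ (A + B) * t0 < R / 2 := by
    refine ⟨min ε (R / (4 * (A + B))), by positivity, min_le_left _ _, ?_⟩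
    have : min ε (R / (4 * (A + B))) ≤ R / (4 * (A + B)) := min_le_right _ _
    rw [le_div_iff₀ (by positivity)] at this
    linarith
  have hev : ∀ᶠ z in 𝓝 p, ‖1 - a z N0‖ < ε ∧ - r z < t0 ^ 2 := by
    refine Filter.Eventually.and ?_ ?_
    · have h1 : ContinuousAt (fun z => ‖1 - a z N0‖) p :=
        (continuousAt_const.sub (H.ac.clm_apply continuousAt_const)).norm
      have h2 : ‖1 - a p N0‖ < ε := by rw [hN0]; simpa using hε0
      exact h1.eventually_lt continuousAt_const h2
    · have h2 : - r p < t0 ^ 2 := by rw [H.rp]; simp; positivity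
      exact H.rc.neg.eventually_lt continuousAt_const h2
  obtain ⟨V1, hV1, hV⟩ := Metric.eventually_nhds_iff_ball.1 hev
  refine ⟨min V1 (R / 2), by positivity, fun z hz X hX => ?_⟩
  obtain ⟨hzΩ, hzV⟩ := hz
  obtain ⟨hz1, hz2⟩ := hV z (ball_subset_ball (min_le_left _ _) hzV)
  have hzR2 : ‖z - p‖ < R / 2 := by
    have := ball_subset_ball (min_le_right _ _) hzV
    rwa [mem_ball, dist_eq_norm] at this
  have hzR : z ∈ ball p R := by rw [mem_ball, dist_eq_norm]; linarith
  have hδ : 0 < - r z := by have := (hdom z (ball_subset_ball hr1 hzR)).1 hzΩ; linarith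
  obtain ⟨δ, hδd⟩ : ∃ δ, δ = - r z := ⟨_, rfl⟩
  rw [← hδd] at hz2 hδ hX
  obtain ⟨t, ht⟩ : ∃ t, t = Real.sqrt δ := ⟨_, rfl⟩
  have htp : 0 < t := by rw [ht]; positivity
  have htδ : t ^ 2 = δ := by rw [ht, Real.sq_sqrt hδ.le]
  have htt0 : t < t0 := lt_of_pow_lt_pow_left₀ 2 ht0.le (by rw [htδ]; exact hz2)
  have htε : t ≤ ε := htt0.le.trans ht1
  obtain ⟨x, hx⟩ : ∃ x : ℂ, x = a z X / δ := ⟨_, rfl⟩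
  have hδC : (δ : ℂ) ≠ 0 := by exact_mod_cast hδ.ne'
  have haX : a z X = x * δ := by rw [hx]; field_simp
  have hLX0 : 0 ≤ L X := le_trans (by positivity) (H.Llow X)
  have hxn : ‖x‖ ^ 2 + L X / δ = 1 := by
    rw [hx, norm_div, div_pow, Complex.norm_real, Real.norm_of_nonneg hδ.le]; exact hX
  have hLX : L X = δ * (1 - ‖x‖ ^ 2) := by
    rw [← hxn]; field_simp; ring
  have hx1 : ‖x‖ ≤ 1 := by
    have : 0 ≤ L X / δ := by positivity
    exact (sq_le_one_iff₀ (norm_nonneg x)).1 (by linarith)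
  have hXn : ‖X‖ ^ 2 ≤ t ^ 2 / c := by
    rw [le_div_iff₀ hc, htδ]
    have := H.Llow X
    have : 0 ≤ δ * ‖x‖ ^ 2 := by positivity
    linarith
  have hXn2 : ‖X‖ ≤ t / Real.sqrt c := by
    refine (pow_le_pow_iff_left₀ (norm_nonneg _) (by positivity) two_ne_zero).1 ?_
    rwa [div_pow, Real.sq_sqrt hc.le]
  let m : ℂ → ℂ := fun ζ => (s * ζ) / (1 + x * (s * ζ))
  have hσ : ∀ ζ ∈ ball (0:ℂ) 1, ‖(s:ℂ) * ζ‖ ≤ s := by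
    intro ζ hζ
    have hζ' : ‖ζ‖ < 1 := by simpa using hζ
    rw [norm_mul, Complex.norm_real, Real.norm_of_nonneg hs0.le]
    exact mul_le_of_le_one_right hs0.le hζ'.le
  have hden : ∀ ζ ∈ ball (0:ℂ) 1, 1 - s ≤ ‖1 + x * (s * ζ)‖ ∧ ‖1 + x * (s * ζ)‖ ≤ 2 := by
    intro ζ hζ
    have h1 : ‖x * (s * ζ)‖ ≤ s := by
      rw [norm_mul]
      exact (mul_le_of_le_one_left (norm_nonneg _) hx1).trans (hσ ζ hζ)
    constructor
    · have := norm_sub_norm_le (1:ℂ) (-(x * (s * ζ)))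
      rw [norm_neg, norm_one, sub_neg_eq_add] at this
      linarith
    · refine (norm_add_le _ _).trans ?_
      rw [norm_one]; linarith
  have hdne : ∀ ζ ∈ ball (0:ℂ) 1, 1 + x * (s * ζ) ≠ 0 := fun ζ hζ =>
    norm_pos_iff.1 (hs1.trans_le (hden ζ hζ).1)
  have hmn : ∀ ζ ∈ ball (0:ℂ) 1, ‖m ζ‖ ≤ M := by
    intro ζ hζ
    simp only [m]
    rw [norm_div, hM]
    exact div_le_div₀ zero_le_one ((hσ ζ hζ).trans hs.le) hs1 (hden ζ hζ).1
  have hmd : DifferentiableOn ℂ m (ball 0 1) := by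
    apply DifferentiableOn.div (by fun_prop) (by fun_prop) hdne
  have hm0 : m 0 = 0 := by simp [m]
  have hmd0 : HasDerivAt m s 0 := by
    have e1 : HasDerivAt (fun w : ℂ => (s : ℂ) * w) (s : ℂ) 0 := by
      simpa using ((hasDerivAt_id (0:ℂ)).const_mul (s : ℂ))
    have e2 := e1.div ((e1.const_mul x).const_add 1) (hdne 0 (by simp))
    refine e2.congr_deriv ?_
    simp
  let φ : ℂ → E := fun ζ => z + (m ζ • X + (-(m ζ ^ 2 / 2) * S X X) • N0)
  refine ⟨φ, ?_, ?_, ?_, ?_⟩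
  · exact ((hmd.smul_const X).add ((((hmd.pow 2).div_const 2).neg.mul_const _).smul_const N0)).const_add z
  · intro ζ hζ
    obtain ⟨v, hv⟩ : ∃ v, v = m ζ • X := ⟨_, rfl⟩
    obtain ⟨u, hu⟩ : ∃ u, u = (-(m ζ ^ 2 / 2) * S X X) • N0 := ⟨_, rfl⟩
    have hφ : φ ζ - z = v + u := by simp only [φ]; rw [← hv, ← hu]; abel
    have hSX : ‖S X X‖ ≤ ‖S‖ * (t ^ 2 / c) := by
      refine (S.le_opNorm₂ X X).trans ?_
      have : ‖S‖ * ‖X‖ * ‖X‖ = ‖S‖ * ‖X‖ ^ 2 := by ring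
      rw [this]; gcongr
    have hvn : ‖v‖ ≤ A * t := by
      rw [hv, norm_smul, hA]
      calc ‖m ζ‖ * ‖X‖ ≤ M * (t / Real.sqrt c) := by gcongr; exact hmn ζ hζ
        _ = _ := by ring
    have hun : ‖u‖ ≤ B * t ^ 2 := by
      rw [hu, norm_smul, norm_mul, norm_neg, norm_div, norm_pow, hB]
      simp only [Complex.norm_ofNat]
      calc ‖m ζ‖ ^ 2 / 2 * ‖S X X‖ * ‖N0‖ ≤ M ^ 2 / 2 * (‖S‖ * (t ^ 2 / c)) * ‖N0‖ := by
            gcongr; exact hmn ζ hζ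
        _ = _ := by field_simp
    have hun1 : ‖u‖ ≤ B * t * ε := by
      refine hun.trans ?_
      have : B * t * t ≤ B * t * ε := by gcongr
      calc _ = B * t * t := by ring
        _ ≤ _ := this
    have hun2 : ‖u‖ ≤ B * t := by
      refine hun1.trans ?_
      have : B * t * ε ≤ B * t * 1 := by gcongr
      linarith
    have hvun : ‖v + u‖ ≤ (A + B) * t := by
      refine (norm_add_le _ _).trans ?_
      linarith
    have hφR : φ ζ ∈ ball p R := by
      rw [mem_ball, dist_eq_norm]
      have e1 : φ ζ - p = (v + u) + (z - p) := by rw [← hφ]; abel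
      have e2 : (A + B) * t ≤ (A + B) * t0 := by gcongr
      rw [e1]
      refine (norm_add_le _ _).trans_lt ?_
      linarith
    apply (hdom _ (ball_subset_ball hr1 hφR)).2
    have key := (abs_le.1 (htay z (ball_subset_ball hr2 hzR) _ (ball_subset_ball hr2 hφR))).2
    rw [hφ] at key
    -- expand
    have f1 : (a z v).re = δ * (x * m ζ).re := by
      rw [hv, map_smul, smul_eq_mul, haX]
      have : m ζ * (x * δ) = δ * (x * m ζ) := by ring
      rw [this, Complex.re_ofReal_mul]
    have f2 : a z u = -(m ζ ^ 2 / 2) * S X X * a z N0 := by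
      rw [hu, map_smul, smul_eq_mul]
    have f3 : S (v + u) (v + u) = m ζ ^ 2 * S X X + (S v u + S u v + S u u) := by
      have : S v v = m ζ ^ 2 * S X X := by
        rw [hv]; simp; ring
      rw [← this]; simp; ring
    have f4 : 2 * (a z u).re + (m ζ ^ 2 * S X X).re = (m ζ ^ 2 * S X X * (1 - a z N0)).re := by
      rw [f2]
      have : (2 : ℝ) * (-(m ζ ^ 2 / 2) * S X X * a z N0).re = (2 * (-(m ζ ^ 2 / 2) * S X X * a z N0)).re := by
        rw [show (2:ℂ) = ((2:ℝ):ℂ) by simp, Complex.re_ofReal_mul]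
      rw [this, ← Complex.add_re]
      congr 1; ring
    have g1 : (m ζ ^ 2 * S X X * (1 - a z N0)).re ≤ M ^ 2 * ‖S‖ / c * t ^ 2 * ε := by
      refine (Complex.re_le_norm _).trans ?_
      rw [norm_mul, norm_mul, norm_pow]
      calc ‖m ζ‖ ^ 2 * ‖S X X‖ * ‖1 - a z N0‖ ≤ M ^ 2 * (‖S‖ * (t ^ 2 / c)) * ε := by
            gcongr; exact hmn ζ hζ
        _ = _ := by ring
    have huv : 2 * ‖v‖ * ‖u‖ + ‖u‖ ^ 2 ≤ (2 * A * B + B ^ 2) * t ^ 2 * ε := by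
      have e1 : 2 * ‖v‖ * ‖u‖ ≤ 2 * (A * t) * (B * t * ε) := by gcongr
      have e2 : ‖u‖ * ‖u‖ ≤ (B * t) * (B * t * ε) := by gcongr
      linarith
    have g2 : (S v u + S u v + S u u).re ≤ ‖S‖ * ((2 * A * B + B ^ 2) * t ^ 2 * ε) := by
      refine (Complex.re_le_norm _).trans ?_
      have e1 := S.le_opNorm₂ v u
      have e2 := S.le_opNorm₂ u v
      have e3 := S.le_opNorm₂ u u
      have e4 : ‖S‖ * (2 * ‖v‖ * ‖u‖ + ‖u‖ ^ 2) ≤ ‖S‖ * ((2 * A * B + B ^ 2) * t ^ 2 * ε) := by gcongr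
      have e5 := norm_add₃_le (a := S v u) (b := S u v) (c := S u u)
      linarith
    have g3 : L (v + u) ≤ ‖m ζ‖ ^ 2 * L X + C * ((2 * A * B + B ^ 2) * t ^ 2 * ε) := by
      refine (H.Lsub v u).trans ?_
      rw [← H.Lsm, ← hv]
      gcongr
    have g4 : ε * ‖v + u‖ ^ 2 ≤ (A + B) ^ 2 * t ^ 2 * ε := by
      calc ε * ‖v + u‖ ^ 2 ≤ ε * ((A + B) * t) ^ 2 := by gcongr
        _ = _ := by ring
    have g5 := moebius_id x (s * ζ) (hdne ζ hζ)
    change 1 - 2 * (x * m ζ).re - ‖m ζ‖ ^ 2 * (1 - ‖x‖ ^ 2) = _ at g5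
    have g6 : (1 - s ^ 2) / 4 ≤ (1 - ‖(s:ℂ) * ζ‖ ^ 2) / ‖1 + x * (s * ζ)‖ ^ 2 := by
      have e1 : ‖(s:ℂ) * ζ‖ ^ 2 ≤ s ^ 2 := by have := hσ ζ hζ; gcongr
      have e2 : ‖1 + x * (s * ζ)‖ ^ 2 ≤ 2 ^ 2 := by have := (hden ζ hζ).2; gcongr
      have e3 : 0 < ‖1 + x * (s * ζ)‖ := hs1.trans_le (hden ζ hζ).1
      apply div_le_div₀ (by linarith) (by linarith) (by positivity) (by linarith)
    rw [map_add, Complex.add_re, f3, Complex.add_re, f1] at key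
    have hrz : r z = - δ := by rw [hδd]; ring
    rw [hrz] at key
    rw [hLX] at g3
    have tot : r (φ ζ) ≤ - δ * (1 - 2 * (x * m ζ).re - ‖m ζ‖ ^ 2 * (1 - ‖x‖ ^ 2)) + δ * (ε * K) := by
      rw [hK, ← htδ]
      rw [← htδ] at key g3
      linarith
    rw [g5] at tot
    have : δ * (ε * K) < δ * ((1 - ‖(s:ℂ) * ζ‖ ^ 2) / ‖1 + x * (s * ζ)‖ ^ 2) := by
      apply mul_lt_mul_of_pos_left _ hδ
      linarith
    linarith
  · simp [φ, hm0]
  · have := ((hmd0.smul_const X).add ((((hmd0.pow 2).div_const 2).neg.mul_const (S X X)).smul_const N0)).const_add z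
    have h2 : HasDerivAt φ ((s:ℂ) • X) 0 := by
      refine this.congr_deriv ?_
      simp [hm0]
    exact h2.deriv

noncomputable def levQ {E : Type*} [NormedAddCommGroup E] [NormedSpace ℂ E] [NormedSpace ℝ E]
    (H : E →L[ℝ] E →L[ℝ] ℝ) (w : E) : ℝ := (H w w + H (Complex.I • w) (Complex.I • w)) / 4

theorem cplx_smul_eq {E : Type*} [NormedAddCommGroup E] [NormedSpace ℂ E] [NormedSpace ℝ E]
    [IsScalarTower ℝ ℂ E] (m : ℂ) (w : E) : m • w = m.re • w + m.im • (Complex.I • w) := by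
  rw [← smul_assoc, ← algebraMap_smul ℂ m.re w, ← add_smul]
  congr 1
  apply Complex.ext <;> simp

theorem levQ_smul {E : Type*} [NormedAddCommGroup E] [NormedSpace ℂ E] [NormedSpace ℝ E]
    [IsScalarTower ℝ ℂ E] (H : E →L[ℝ] E →L[ℝ] ℝ) (hH : ∀ v w, H v w = H w v) (m : ℂ) (w : E) :
    levQ H (m • w) = ‖m‖ ^ 2 * levQ H w := by
  have h1 : Complex.I • (m • w) = m.re • (Complex.I • w) - m.im • w := by
    rw [smul_comm, cplx_smul_eq m (Complex.I • w), smul_smul Complex.I Complex.I w]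
    simp [sub_eq_add_neg]
  unfold levQ
  rw [h1, cplx_smul_eq m w, ← Complex.normSq_eq_norm_sq, Complex.normSq_apply]
  simp only [map_add, map_sub, map_smul, add_apply, sub_apply, smul_apply, smul_eq_mul,
    FunLike.coe_add, FunLike.coe_sub, FunLike.coe_smul, Pi.add_apply, Pi.sub_apply, Pi.smul_apply]
  rw [hH (Complex.I • w) w]
  ring

theorem levQ_fun {E : Type*} [NormedAddCommGroup E] [NormedSpace ℂ E] [NormedSpace ℝ E]
    [IsScalarTower ℝ ℂ E] (H : E →L[ℝ] E →L[ℝ] ℝ) (hH : ∀ v w, H v w = H w v)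
    (hpos : ∀ w, w ≠ 0 → 0 < levQ H w) (X : E) :
    ∃ l : E →L[ℂ] ℂ, l X = (Real.sqrt (levQ H X) : ℂ) ∧ ∀ w, ‖l w‖ ^ 2 ≤ levQ H w := by
  have hnn : ∀ w, 0 ≤ levQ H w := by
    intro w
    by_cases h : w = 0
    · subst h; simp [levQ]
    · exact (hpos w h).le
  by_cases hX : X = 0
  · subst hX
    refine ⟨0, by simp [levQ], fun w => by simpa using hnn w⟩
  have hLX := hpos X hX
  let J : E →L[ℝ] E := ((Complex.I • ContinuousLinearMap.id ℂ E : E →L[ℂ] E)).restrictScalars ℝ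
  have hJ : ∀ w, J w = Complex.I • w := fun w => by simp [J]
  let q : E →L[ℝ] ℝ := (1/4 : ℝ) • (H X + (H (Complex.I • X)).comp J)
  have hq : ∀ w, q w = (H X w + H (Complex.I • X) (Complex.I • w)) / 4 := fun w => by
    simp [q, hJ]; ring
  have hqX : q X = levQ H X := by rw [hq]; rfl
  have hCS : ∀ w, q w ^ 2 ≤ levQ H w * levQ H X := by
    intro w
    have h1 := hnn (w - (q w / levQ H X) • X)
    have h2 : levQ H (w - (q w / levQ H X) • X) = levQ H w - 2 * (q w / levQ H X) * q w + (q w / levQ H X) ^ 2 * levQ H X := by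
      have e1 : Complex.I • (w - (q w / levQ H X) • X) = Complex.I • w - (q w / levQ H X) • (Complex.I • X) := by
        rw [smul_sub, smul_comm]
      generalize (q w / levQ H X) = t at *
      rw [hq]
      unfold levQ
      rw [e1]
      simp only [map_sub, map_smul, sub_apply, smul_apply, smul_eq_mul,
        FunLike.coe_sub, FunLike.coe_smul, Pi.sub_apply, Pi.smul_apply]
      rw [hH w X, hH (Complex.I • w) (Complex.I • X)]
      ring
    rw [h2] at h1
    have h3 : levQ H w - 2 * (q w / levQ H X) * q w + (q w / levQ H X) ^ 2 * levQ H X = levQ H w - q w ^ 2 / levQ H X := by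
      field_simp; ring
    rw [h3] at h1
    have h4 : q w ^ 2 / levQ H X ≤ levQ H w := by linarith
    rwa [div_le_iff₀ hLX] at h4
  let b : E →L[ℂ] ℂ := StrongDual.extendRCLike (𝕜 := ℂ) q
  have hbre : ∀ w, (b w).re = q w := fun w => StrongDual.re_extendRCLike_apply (𝕜 := ℂ) q w
  have hbim : ∀ w, (b w).im = - q (Complex.I • w) := fun w => StrongDual.im_extendRCLike_apply (𝕜 := ℂ) q w
  have hbX : b X = (levQ H X : ℂ) := by
    apply Complex.ext
    · rw [hbre, hqX]; simp
    · rw [hbim, hq, smul_smul, hH X]; simp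
  have hbn : ∀ w, ‖b w‖ ^ 2 ≤ levQ H w * levQ H X := by
    intro w
    obtain ⟨μ, hμ, hμw⟩ : ∃ μ : ℂ, ‖μ‖ = 1 ∧ μ * b w = (‖b w‖ : ℂ) := by
      by_cases h0 : b w = 0
      · exact ⟨1, by simp, by simp [h0]⟩
      · have h1 : (‖b w‖ : ℂ) ≠ 0 := by simpa using h0
        refine ⟨(‖b w‖ : ℂ) / b w, ?_, by field_simp⟩
        rw [norm_div, Complex.norm_real, norm_norm, div_self]
        simpa using h0
    have h1 : q (μ • w) = ‖b w‖ := by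
      rw [← hbre, map_smul, smul_eq_mul, hμw, Complex.ofReal_re]
    have h2 := hCS (μ • w)
    rw [h1, levQ_smul H hH, hμ] at h2
    simpa using h2
  have hsp : 0 < Real.sqrt (levQ H X) := Real.sqrt_pos.2 hLX
  refine ⟨((Real.sqrt (levQ H X))⁻¹ : ℂ) • b, ?_, fun w => ?_⟩
  · rw [smul_apply, hbX, smul_eq_mul, ← Complex.ofReal_inv, ← Complex.ofReal_mul]
    congr 1
    rw [inv_mul_eq_iff_eq_mul₀ hsp.ne', Real.mul_self_sqrt hLX.le]
  · rw [smul_apply, norm_smul, mul_pow, norm_inv, Complex.norm_real, Real.norm_of_nonneg hsp.le, inv_pow,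
      Real.sq_sqrt hLX.le, inv_mul_le_iff₀ hLX, mul_comm]
    exact hbn w

theorem herm_S {E : Type*} [NormedAddCommGroup E] [NormedSpace ℂ E] [NormedSpace ℝ E]
    [IsScalarTower ℝ ℂ E] (H : E →L[ℝ] E →L[ℝ] ℝ) :
    ∃ S : E →L[ℂ] E →L[ℂ] ℂ, ∀ w, (S w w).re + levQ H w = H w w / 2 := by
  let f : E → E → ℂ := fun v w => ((H v w - H (Complex.I • v) (Complex.I • w) : ℝ)
    - Complex.I * (H (Complex.I • v) w + H v (Complex.I • w) : ℝ)) / 4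
  have hII : ∀ w : E, Complex.I • Complex.I • w = - w := fun w => by rw [smul_smul]; simp
  have hfa1 : ∀ v v' w, f (v + v') w = f v w + f v' w := by
    intro v v' w; simp [f]; ring
  have hfa2 : ∀ v w w', f v (w + w') = f v w + f v w' := by
    intro v v' w; simp [f]; ring
  have hfs1 : ∀ (m : ℝ) v w, f (m • v) w = m * f v w := by
    intro m v w
    simp only [f]; rw [smul_comm Complex.I m v]; simp; ring
  have hfs2 : ∀ (m : ℝ) v w, f v (m • w) = m * f v w := by
    intro m v w
    simp only [f]; rw [smul_comm Complex.I m w]; simp; ring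
  have hfI1 : ∀ v w, f (Complex.I • v) w = Complex.I * f v w := by
    intro v w
    simp only [f]; rw [hII]; simp
    linear_combination (-(H (Complex.I • v) w + H v (Complex.I • w) : ℂ) / 4) * (-Complex.I_sq)
  have hfI2 : ∀ v w, f v (Complex.I • w) = Complex.I * f v w := by
    intro v w
    simp only [f]; rw [hII]; simp
    linear_combination (-(H (Complex.I • v) w + H v (Complex.I • w) : ℂ) / 4) * (-Complex.I_sq)
  have hfc1 : ∀ (m : ℂ) v w, f (m • v) w = m • f v w := by
    intro m v w
    rw [cplx_smul_eq m v, hfa1, hfs1, hfs1, hfI1, smul_eq_mul]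
    conv_rhs => rw [← Complex.re_add_im m]
    ring
  have hfc2 : ∀ (m : ℂ) v w, f v (m • w) = m • f v w := by
    intro m v w
    rw [cplx_smul_eq m w, hfa2, hfs2, hfs2, hfI2, smul_eq_mul]
    conv_rhs => rw [← Complex.re_add_im m]
    ring
  let S := LinearMap.mkContinuous₂ (LinearMap.mk₂ ℂ f hfa1 hfc1 hfa2 hfc2) ‖H‖ (by
    intro v w
    rw [LinearMap.mk₂_apply]
    have hb : ∀ v w, |H v w| ≤ ‖H‖ * ‖v‖ * ‖w‖ := fun v w => H.le_opNorm₂ v w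
    have e1 := hb v w
    have e2 := hb (Complex.I • v) (Complex.I • w)
    have e3 := hb (Complex.I • v) w
    have e4 := hb v (Complex.I • w)
    have hI : ∀ w : E, ‖Complex.I • w‖ = ‖w‖ := fun w => by rw [norm_smul]; simp
    rw [hI, hI] at e2
    rw [hI] at e3 e4
    simp only [f]
    rw [norm_div]
    have e5 : ‖((H v w - H (Complex.I • v) (Complex.I • w) : ℝ) : ℂ) - Complex.I * (H (Complex.I • v) w + H v (Complex.I • w) : ℝ)‖ ≤ |H v w - H (Complex.I • v) (Complex.I • w)| + |H (Complex.I • v) w + H v (Complex.I • w)| := by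
      refine (norm_sub_le _ _).trans ?_
      rw [norm_mul, Complex.norm_I, one_mul, Complex.norm_real, Complex.norm_real, Real.norm_eq_abs, Real.norm_eq_abs]
    have e6 := abs_sub (H v w) (H (Complex.I • v) (Complex.I • w))
    have e7 := abs_add_le (H (Complex.I • v) w) (H v (Complex.I • w))
    rw [Complex.norm_ofNat, div_le_iff₀ (by norm_num)]
    linarith)
  refine ⟨S, fun w => ?_⟩
  have : S w w = f w w := rfl
  rw [this]
  simp only [f, levQ]
  rw [show (4:ℂ) = ((4:ℝ):ℂ) by simp, Complex.div_ofReal_re]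
  simp only [Complex.sub_re, Complex.ofReal_re, Complex.mul_re, Complex.I_re, Complex.I_im, Complex.ofReal_im]
  ring

theorem levQ_cont {E : Type*} [NormedAddCommGroup E] [NormedSpace ℂ E] [NormedSpace ℝ E]
    (H : E →L[ℝ] E →L[ℝ] ℝ) : Continuous (levQ H) := by
  unfold levQ
  have h1 : Continuous fun w : E => Complex.I • w := continuous_const_smul _
  have h2 : Continuous fun w : E => H w w := H.continuous.clm_apply continuous_id
  have h3 : Continuous fun w : E => H (Complex.I • w) (Complex.I • w) := h2.comp h1
  exact (h2.add h3).div_const 4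

theorem levQ_abs {E : Type*} [NormedAddCommGroup E] [NormedSpace ℂ E] [NormedSpace ℝ E]
    (H : E →L[ℝ] E →L[ℝ] ℝ) (w : E) : |levQ H w| ≤ ‖H‖ * ‖w‖ ^ 2 := by
  have e1 : |H w w| ≤ ‖H‖ * ‖w‖ * ‖w‖ := H.le_opNorm₂ w w
  have e2 : |H (Complex.I • w) (Complex.I • w)| ≤ ‖H‖ * ‖Complex.I • w‖ * ‖Complex.I • w‖ := H.le_opNorm₂ _ _
  rw [norm_smul, Complex.norm_I, one_mul] at e2
  unfold levQ
  rw [abs_div, abs_of_pos (by norm_num : (0:ℝ) < 4), div_le_iff₀ (by norm_num)]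
  have e3 := abs_add_le (H w w) (H (Complex.I • w) (Complex.I • w))
  have : 0 ≤ ‖H‖ * ‖w‖ ^ 2 := by positivity
  nlinarith

theorem levQ_sub {E : Type*} [NormedAddCommGroup E] [NormedSpace ℂ E] [NormedSpace ℝ E]
    (H H' : E →L[ℝ] E →L[ℝ] ℝ) (w : E) : levQ (H - H') w = levQ H w - levQ H' w := by
  simp [levQ]; ring

theorem exists_A {E : Type*} [NormedAddCommGroup E] [NormedSpace ℂ E] [NormedSpace ℝ E]
    [IsScalarTower ℝ ℂ E] [FiniteDimensional ℂ E]
    (H : E →L[ℝ] E →L[ℝ] ℝ) (hH : ∀ v w, H v w = H w v) (a : E →L[ℂ] ℂ)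
    (hpos : ∀ X, X ≠ 0 → a X = 0 → 0 < levQ H X) :
    ∃ A ≥ (0:ℝ), ∃ c > (0:ℝ), ∀ X, c * ‖X‖ ^ 2 ≤ levQ H X + 2 * A * ‖a X‖ ^ 2 := by
  haveI : ProperSpace E := FiniteDimensional.proper ℂ E
  have hK : IsCompact (sphere (0:E) 1) := isCompact_sphere 0 1
  have hc : ∀ k : ℝ, Continuous fun X => levQ H X + 2 * k * ‖a X‖ ^ 2 := fun k =>
    (levQ_cont H).add (continuous_const.mul (a.continuous.norm.pow 2))
  obtain ⟨k, hk⟩ : ∃ k : ℕ, sphere (0:E) 1 ⊆ {X | 0 < levQ H X + 2 * (k:ℝ) * ‖a X‖ ^ 2} := by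
    refine hK.elim_directed_cover (fun k : ℕ => {X | 0 < levQ H X + 2 * (k:ℝ) * ‖a X‖ ^ 2})
      (fun k => isOpen_lt continuous_const (hc k)) ?_ ?_
    · intro X hX
      have hX0 : X ≠ 0 := by rintro rfl; simp at hX
      rw [mem_iUnion]
      by_cases h0 : a X = 0
      · exact ⟨0, by simpa using hpos X hX0 h0⟩
      · have hp : 0 < ‖a X‖ ^ 2 := by have := norm_pos_iff.2 h0; positivity
        obtain ⟨k, hk⟩ := exists_nat_gt (-levQ H X / ‖a X‖ ^ 2)
        refine ⟨k, ?_⟩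
        rw [div_lt_iff₀ hp] at hk
        show 0 < levQ H X + 2 * (k:ℝ) * ‖a X‖ ^ 2
        have : 0 ≤ (k:ℝ) * ‖a X‖ ^ 2 := by positivity
        nlinarith
    · refine Monotone.directed_le ?_
      intro i j hij X hX
      have hX' : 0 < levQ H X + 2 * (i:ℝ) * ‖a X‖ ^ 2 := hX
      show 0 < levQ H X + 2 * (j:ℝ) * ‖a X‖ ^ 2
      have : (i:ℝ) ≤ j := by exact_mod_cast hij
      have : 2 * (i:ℝ) * ‖a X‖ ^ 2 ≤ 2 * (j:ℝ) * ‖a X‖ ^ 2 := by gcongr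
      linarith
  refine ⟨k, by positivity, ?_⟩
  obtain ⟨c, hc0, hcm⟩ : ∃ c > (0:ℝ), ∀ X ∈ sphere (0:E) 1, c ≤ levQ H X + 2 * (k:ℝ) * ‖a X‖ ^ 2 := by
    by_cases hne : (sphere (0:E) 1).Nonempty
    · obtain ⟨x, hx, hmin⟩ := hK.exists_isMinOn hne (hc k).continuousOn
      exact ⟨_, hk hx, fun X hX => hmin hX⟩
    · rw [not_nonempty_iff_eq_empty] at hne
      exact ⟨1, one_pos, fun X hX => by simp [hne] at hX⟩
  refine ⟨c, hc0, fun X => ?_⟩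
  by_cases hX : X = 0
  · subst hX; simp [levQ]
  have hn : 0 < ‖X‖ := norm_pos_iff.2 hX
  have hY : ((‖X‖⁻¹ : ℝ) : ℂ) • X ∈ sphere (0:E) 1 := by
    simp [norm_smul, hn.ne']
  have h1 := hcm _ hY
  rw [levQ_smul H hH, map_smul, norm_smul, Complex.norm_real, Real.norm_of_nonneg (by positivity)] at h1
  have h2 : c * ‖X‖ ^ 2 ≤ ((‖X‖⁻¹) ^ 2 * levQ H X + 2 * (k:ℝ) * (‖X‖⁻¹ * ‖a X‖) ^ 2) * ‖X‖ ^ 2 := by gcongr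
  have h3 : ((‖X‖⁻¹) ^ 2 * levQ H X + 2 * (k:ℝ) * (‖X‖⁻¹ * ‖a X‖) ^ 2) * ‖X‖ ^ 2 = levQ H X + 2 * k * ‖a X‖ ^ 2 := by
    field_simp
  linarith

noncomputable def cdr {E : Type*} [NormedAddCommGroup E] [NormedSpace ℂ E] [NormedSpace ℝ E]
    [IsScalarTower ℝ ℂ E] (f : E →L[ℝ] ℝ) : E →L[ℂ] ℂ := (1/2 : ℂ) • StrongDual.extendRCLike (𝕜 := ℂ) f

theorem cdr_re {E : Type*} [NormedAddCommGroup E] [NormedSpace ℂ E] [NormedSpace ℝ E]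
    [IsScalarTower ℝ ℂ E] (f : E →L[ℝ] ℝ) (w : E) : 2 * (cdr f w).re = f w := by
  have h := StrongDual.re_extendRCLike_apply (𝕜 := ℂ) f w
  simp only [RCLike.re_to_complex] at h
  unfold cdr
  rw [smul_apply, show (1/2 : ℂ) = ((1/2:ℝ):ℂ) by push_cast; rfl, smul_eq_mul, Complex.re_ofReal_mul, h]
  ring

theorem cdr_apply {E : Type*} [NormedAddCommGroup E] [NormedSpace ℂ E] [NormedSpace ℝ E]
    [IsScalarTower ℝ ℂ E] (f : E →L[ℝ] ℝ) (w : E) :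
    cdr f w = ((f w : ℂ) - Complex.I * (f (Complex.I • w) : ℂ)) / 2 := by
  unfold cdr
  rw [smul_apply, StrongDual.extendRCLike_apply, smul_eq_mul]
  simp only [RCLike.I_to_complex, Complex.coe_algebraMap, RCLike.ofReal_eq_complex_ofReal]
  ring

theorem cdr_normsq {E : Type*} [NormedAddCommGroup E] [NormedSpace ℂ E] [NormedSpace ℝ E]
    [IsScalarTower ℝ ℂ E] (f : E →L[ℝ] ℝ) (w : E) :
    ‖cdr f w‖ ^ 2 = (f w ^ 2 + f (Complex.I • w) ^ 2) / 4 := by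
  rw [cdr_apply, ← Complex.normSq_eq_norm_sq, map_div₀, Complex.normSq_apply]
  simp
  ring

theorem cdr_smul {E : Type*} [NormedAddCommGroup E] [NormedSpace ℂ E] [NormedSpace ℝ E]
    [IsScalarTower ℝ ℂ E] (t : ℝ) (f : E →L[ℝ] ℝ) (w : E) :
    cdr (t • f) w = t * cdr f w := by
  rw [cdr_apply, cdr_apply]; simp; ring

theorem cdr_sub {E : Type*} [NormedAddCommGroup E] [NormedSpace ℂ E] [NormedSpace ℝ E]
    [IsScalarTower ℝ ℂ E] (f g : E →L[ℝ] ℝ) (w : E) :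
    cdr (f - g) w = cdr f w - cdr g w := by
  rw [cdr_apply, cdr_apply, cdr_apply]; simp; ring

theorem cdr_norm_le {E : Type*} [NormedAddCommGroup E] [NormedSpace ℂ E] [NormedSpace ℝ E]
    [IsScalarTower ℝ ℂ E] (f : E →L[ℝ] ℝ) (w : E) : ‖cdr f w‖ ≤ ‖f‖ * ‖w‖ := by
  have h := cdr_normsq f w
  have e1 : |f w| ≤ ‖f‖ * ‖w‖ := f.le_opNorm w
  have e2 : |f (Complex.I • w)| ≤ ‖f‖ * ‖Complex.I • w‖ := f.le_opNorm _
  rw [norm_smul, Complex.norm_I, one_mul] at e2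
  have e3 := sq_le_sq' (abs_le.1 e1).1 (abs_le.1 e1).2
  have e4 := sq_le_sq' (abs_le.1 e2).1 (abs_le.1 e2).2
  refine (pow_le_pow_iff_left₀ (norm_nonneg _) (by positivity) two_ne_zero).1 ?_
  rw [h]
  have : 0 ≤ (‖f‖ * ‖w‖) ^ 2 := by positivity
  linarith

theorem cdr_cont {E : Type*} [NormedAddCommGroup E] [NormedSpace ℂ E] [NormedSpace ℝ E]
    [IsScalarTower ℝ ℂ E] : Continuous (cdr (E := E)) := by
  refine LipschitzWith.continuous (K := 1) (LipschitzWith.of_dist_le_mul fun f g => ?_)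
  rw [dist_eq_norm, dist_eq_norm, NNReal.coe_one, one_mul]
  refine ContinuousLinearMap.opNorm_le_bound _ (norm_nonneg _) fun w => ?_
  rw [sub_apply, ← cdr_sub]
  exact cdr_norm_le _ _

theorem tilde_data {E : Type*} [NormedAddCommGroup E] [NormedSpace ℂ E] [NormedSpace ℝ E]
    [IsScalarTower ℝ ℂ E] [FiniteDimensional ℂ E] (Ω : Set E) (p : E) (r : E → ℝ)
    (hr : ContDiffAt ℝ 2 r p) (hp : r p = 0) (hdom : ∀ᶠ z in 𝓝 p, z ∈ Ω ↔ r z < 0)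
    (hne : cdr (fderiv ℝ r p) ≠ 0)
    (hpos : ∀ X, X ≠ 0 → cdr (fderiv ℝ r p) X = 0 → 0 < levQ (fderiv ℝ (fderiv ℝ r) p) X) :
    ∃ A ≥ (0:ℝ), ∃ S, ∃ c C : ℝ, LocData Ω p (fun z => r z + A * r z ^ 2)
      (fun z => cdr ((1 + 2 * A * r z) • fderiv ℝ r z)) S
      (fun X => levQ (fderiv ℝ (fderiv ℝ r) p) X + 2 * A * ‖cdr (fderiv ℝ r p) X‖ ^ 2) c C := by
  have hsym : IsSymmSndFDerivAt ℝ r p := hr.isSymmSndFDerivAt (by simp)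
  obtain ⟨A, hA, c, hc, hAc⟩ := exists_A (fderiv ℝ (fderiv ℝ r) p) (fun v w => hsym v w)
    (cdr (fderiv ℝ r p)) hpos
  set rt : E → ℝ := fun z => r z + A * r z ^ 2 with hrt
  have hrtC : ContDiffAt ℝ 2 rt p := hr.add (contDiffAt_const.mul (hr.pow 2))
  have hrc : ContinuousAt r p := hr.continuousAt
  have hfd : ContDiffAt ℝ 1 (fderiv ℝ r) p := hr.fderiv_right (by norm_num)
  have hev : ∀ᶠ z in 𝓝 p, fderiv ℝ rt z = (1 + 2 * A * r z) • fderiv ℝ r z := by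
    filter_upwards [hr.eventually (by simp)] with z hz
    have hd : HasFDerivAt r (fderiv ℝ r z) z := (hz.differentiableAt (by norm_num)).hasFDerivAt
    have h1 := hd.add ((hd.pow 2).const_mul A)
    refine HasFDerivAt.fderiv (h1.congr_fderiv ?_)
    ext w
    simp
    ring
  have hH : fderiv ℝ (fderiv ℝ rt) p = fderiv ℝ (fderiv ℝ r) p
      + (2 * A) • (fderiv ℝ r p).smulRight (fderiv ℝ r p) := by
    rw [Filter.EventuallyEq.fderiv_eq hev]
    have hd : HasFDerivAt r (fderiv ℝ r p) p := (hr.differentiableAt (by norm_num)).hasFDerivAt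
    have hd2 : HasFDerivAt (fderiv ℝ r) (fderiv ℝ (fderiv ℝ r) p) p :=
      (hfd.differentiableAt (by norm_num)).hasFDerivAt
    have h1 := ((hd.const_mul (2 * A)).const_add 1).smul hd2
    refine HasFDerivAt.fderiv (h1.congr_fderiv ?_)
    ext v w
    simp [hp]
    ring
  set Ht := fderiv ℝ (fderiv ℝ rt) p with hHt
  have hsymt : IsSymmSndFDerivAt ℝ rt p := hrtC.isSymmSndFDerivAt (by simp)
  have hL : (fun X => levQ (fderiv ℝ (fderiv ℝ r) p) X + 2 * A * ‖cdr (fderiv ℝ r p) X‖ ^ 2) = levQ Ht := by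
    funext X
    rw [hH, cdr_normsq]
    simp [levQ]
    ring
  have hlow : ∀ w, c * ‖w‖ ^ 2 ≤ levQ Ht w := fun w => by
    have := hAc w
    have h2 := congrFun hL w
    linarith
  obtain ⟨S, hS⟩ := herm_S Ht
  refine ⟨A, hA, S, c, ‖Ht‖ + 1, ?_⟩
  rw [hL]
  constructor
  · have h1 : ∀ᶠ z in 𝓝 p, 0 < 1 + A * r z := by
      have : ContinuousAt (fun z => 1 + A * r z) p := continuousAt_const.add (continuousAt_const.mul hrc)
      exact this.eventually (lt_mem_nhds (by simp [hp]))
    filter_upwards [hdom, h1] with z hz h1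
    rw [hz]
    have : rt z = r z * (1 + A * r z) := by simp only [rt]; ring
    show r z < 0 ↔ rt z < 0
    rw [this]
    constructor
    · intro h; exact mul_neg_of_neg_of_pos h h1
    · intro h; by_contra h2; push Not at h2; nlinarith [mul_nonneg h2 h1.le]
  · simp [hp]
  · exact hrtC.continuousAt
  · refine ContinuousAt.comp (g := cdr) cdr_cont.continuousAt ?_
    exact (continuousAt_const.add (continuousAt_const.mul hrc)).smul hfd.continuousAt
  · simpa [hp] using hne
  · exact hc
  · positivity
  · exact hlow
  · intro w
    have := le_trans (le_abs_self _) (levQ_abs Ht w)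
    have h2 : 0 ≤ ‖w‖ ^ 2 := by positivity
    linarith
  · exact fun m w => levQ_smul Ht (fun v w => hsymt v w) m w
  · refine fun X => levQ_fun Ht (fun v w => hsymt v w) (fun w hw => ?_) X
    have : 0 < c * ‖w‖ ^ 2 := by have := norm_pos_iff.2 hw; positivity
    linarith [hlow w]
  · intro ε hε
    obtain ⟨R, hR, hT⟩ := taylor_two rt p hrtC ε hε
    obtain ⟨R', hR', hB⟩ := Metric.eventually_nhds_iff_ball.1 hev
    refine ⟨min R R', lt_min hR hR', fun z hz w hw => ?_⟩
    have h := hT z (ball_subset_ball (min_le_left _ _) hz) w (ball_subset_ball (min_le_left _ _) hw)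
    have e1 := hB z (ball_subset_ball (min_le_right _ _) hz)
    rw [cdr_re, ← e1]
    have e2 := hS (w - z)
    rw [← hHt] at h
    convert h using 2
    linarith

set_option maxHeartbeats 800000 in
theorem cmp_real (b q L δ A e : ℝ) (hδ : 0 < δ) (hA : 0 ≤ A) (he0 : 0 < e) (he : e < 1) (hL : 0 ≤ L)
    (hq : |q - L| ≤ e / 2 * L + 4 * A * b ^ 2) (ht : A * δ ≤ e / 8) :
    (1 - e) * (b ^ 2 / δ ^ 2 + L / δ) ≤ b ^ 2 / δ ^ 2 + q / δ ∧
    b ^ 2 / δ ^ 2 + q / δ ≤ (1 + e) * (b ^ 2 / δ ^ 2 + L / δ) ∧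
    (1 - e) * (b ^ 2 / δ ^ 2 + L / δ) ≤
      ((1 - 2 * (A * δ)) * b) ^ 2 / (δ * (1 - A * δ)) ^ 2 + L / (δ * (1 - A * δ)) ∧
    ((1 - 2 * (A * δ)) * b) ^ 2 / (δ * (1 - A * δ)) ^ 2 + L / (δ * (1 - A * δ)) ≤
      (1 + e) * (b ^ 2 / δ ^ 2 + L / δ) := by
  set t := A * δ with htd
  have ht0 : 0 ≤ t := by positivity
  set B := b ^ 2 / δ ^ 2 with hB
  set M := L / δ with hM
  have hB0 : 0 ≤ B := by positivity
  have hM0 : 0 ≤ M := by positivity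
  have hqd : |q / δ - M| ≤ e / 2 * M + 4 * t * B := by
    have : q / δ - M = (q - L) / δ := by rw [hM]; ring
    rw [this, abs_div, abs_of_pos hδ, div_le_iff₀ hδ]
    have : (e / 2 * M + 4 * t * B) * δ = e / 2 * L + 4 * A * b ^ 2 := by
      rw [hM, htd, hB]; field_simp
    linarith
  have htB : 4 * t * B ≤ e / 2 * B := by linarith [mul_le_mul_of_nonneg_right ht hB0]
  have h1t : 0 < 1 - t := by linarith
  have hN : ((1 - 2 * t) * b) ^ 2 / (δ * (1 - t)) ^ 2 + L / (δ * (1 - t))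
      = ((1 - 2 * t) / (1 - t)) ^ 2 * B + (1 - t)⁻¹ * M := by
    rw [hB, hM]; field_simp
  rw [hN]
  have k1 : (1 - 2 * t) / (1 - t) ≤ 1 := by rw [div_le_one h1t]; linarith
  have k2 : 1 - 2 * t ≤ (1 - 2 * t) / (1 - t) := by
    rw [le_div_iff₀ h1t]; nlinarith
  have k3 : ((1 - 2 * t) / (1 - t)) ^ 2 ≤ 1 := by
    apply pow_le_one₀ _ k1; linarith
  have k4 : 1 - e ≤ ((1 - 2 * t) / (1 - t)) ^ 2 := by
    nlinarith
  have k5 : (1 - t)⁻¹ ≤ 1 + e := by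
    rw [inv_le_iff_one_le_mul₀ h1t]; nlinarith
  have k6 : 1 ≤ (1 - t)⁻¹ := (one_le_inv₀ h1t).2 (by linarith)
  have m1 := mul_le_mul_of_nonneg_right k3 hB0
  have m2 := mul_le_mul_of_nonneg_right k4 hB0
  have m3 := mul_le_mul_of_nonneg_right k5 hM0
  have m4 := mul_le_mul_of_nonneg_right k6 hM0
  have a := abs_le.1 hqd
  have eB : 0 ≤ e * B := by positivity
  have eM : 0 ≤ e * M := by positivity
  refine ⟨?_, ?_, ?_, ?_⟩ <;> linarith [a.1, a.2]

theorem aux_ev {T V1 V2 : Type*} [TopologicalSpace T] [SeminormedAddCommGroup V1] [SeminormedAddCommGroup V2]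
    (F : T → V1) (G : T → V2) (p : T) (A ε : ℝ) (hF : ContinuousAt F p) (hG : ContinuousAt G p) (hε : 0 < ε) :
    ∀ᶠ z in 𝓝 p, ‖F z - F p‖ + 4 * A * ‖G p - G z‖ ^ 2 < ε := by
  have h : ContinuousAt (fun z => ‖F z - F p‖ + 4 * A * ‖G p - G z‖ ^ 2) p := by fun_prop
  exact h.eventually (gt_mem_nhds (by simpa using hε))

set_option maxHeartbeats 1000000 in
theorem cmp_data {E : Type*} [NormedAddCommGroup E] [NormedSpace ℂ E] [NormedSpace ℝ E]
    [IsScalarTower ℝ ℂ E] (p : E) (r : E → ℝ)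
    (hr : ContDiffAt ℝ 2 r p) (hp : r p = 0) (A c : ℝ) (hA : 0 ≤ A) (hc : 0 < c)
    (hlow : ∀ X, c * ‖X‖ ^ 2 ≤ levQ (fderiv ℝ (fderiv ℝ r) p) X + 2 * A * ‖cdr (fderiv ℝ r p) X‖ ^ 2)
    (τ : ℝ) (hτ0 : 0 < τ) (hτ : τ < 1) :
    ∀ᶠ z in 𝓝 p, r z < 0 → ∀ X,
      τ * (‖cdr ((1 + 2 * A * r z) • fderiv ℝ r z) X‖ ^ 2 / (-(r z + A * r z ^ 2)) ^ 2
        + (levQ (fderiv ℝ (fderiv ℝ r) p) X + 2 * A * ‖cdr (fderiv ℝ r p) X‖ ^ 2) / (-(r z + A * r z ^ 2)))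
      ≤ ‖cdr (fderiv ℝ r z) X‖ ^ 2 / (- r z) ^ 2 + levQ (fderiv ℝ (fderiv ℝ r) z) X / (- r z) ∧
      τ * (‖cdr (fderiv ℝ r z) X‖ ^ 2 / (- r z) ^ 2 + levQ (fderiv ℝ (fderiv ℝ r) z) X / (- r z)) ≤
      ‖cdr ((1 + 2 * A * r z) • fderiv ℝ r z) X‖ ^ 2 / (-(r z + A * r z ^ 2)) ^ 2
        + (levQ (fderiv ℝ (fderiv ℝ r) p) X + 2 * A * ‖cdr (fderiv ℝ r p) X‖ ^ 2) / (-(r z + A * r z ^ 2)) := by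
  set e := (1 - τ) / (1 + τ) with he
  have he0 : 0 < e := by apply div_pos <;> linarith
  have he1 : e < 1 := by rw [he, div_lt_one (by linarith)]; linarith
  have hte : τ * (1 + e) = 1 - e := by rw [he]; field_simp; ring
  have hrc : ContinuousAt r p := hr.continuousAt
  have hfd : ContDiffAt ℝ 1 (fderiv ℝ r) p := hr.fderiv_right (by norm_num)
  have hfd2 : ContinuousAt (fderiv ℝ (fderiv ℝ r)) p :=
    (hfd.fderiv_right (m := 0) (by norm_num)).continuousAt
  have ev1 : ∀ᶠ z in 𝓝 p, ‖fderiv ℝ (fderiv ℝ r) z - fderiv ℝ (fderiv ℝ r) p‖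
      + 4 * A * ‖fderiv ℝ r p - fderiv ℝ r z‖ ^ 2 < c * (e / 2) := by
    exact aux_ev (V1 := E →L[ℝ] E →L[ℝ] ℝ) (V2 := E →L[ℝ] ℝ) (fderiv ℝ (fderiv ℝ r)) (fderiv ℝ r) p A (c * (e / 2)) hfd2 hfd.continuousAt (by positivity)
  have ev2 : ∀ᶠ z in 𝓝 p, A * (- r z) < e / 8 := by
    have : ContinuousAt (fun z => A * (- r z)) p := continuousAt_const.mul hrc.neg
    exact this.eventually (gt_mem_nhds (by simp [hp]; positivity))
  filter_upwards [ev1, ev2] with z h1 h2 hz X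
  set L := levQ (fderiv ℝ (fderiv ℝ r) p) X + 2 * A * ‖cdr (fderiv ℝ r p) X‖ ^ 2 with hL
  set b := ‖cdr (fderiv ℝ r z) X‖ with hb
  set q := levQ (fderiv ℝ (fderiv ℝ r) z) X with hq
  have hXL := hlow X
  have hL0 : 0 ≤ L := le_trans (by positivity) hXL
  have hqL : |q - L| ≤ e / 2 * L + 4 * A * b ^ 2 := by
    have g1 : |q - levQ (fderiv ℝ (fderiv ℝ r) p) X| ≤ ‖fderiv ℝ (fderiv ℝ r) z - fderiv ℝ (fderiv ℝ r) p‖ * ‖X‖ ^ 2 := by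
      rw [hq, ← levQ_sub]; exact levQ_abs _ _
    have g2 : ‖cdr (fderiv ℝ r p) X‖ ≤ b + ‖fderiv ℝ r p - fderiv ℝ r z‖ * ‖X‖ := by
      have := cdr_norm_le (fderiv ℝ r p - fderiv ℝ r z) X
      rw [cdr_sub] at this
      have h := norm_add_le (cdr (fderiv ℝ r z) X) (cdr (fderiv ℝ r p) X - cdr (fderiv ℝ r z) X)
      rw [add_sub_cancel] at h
      linarith
    have g3 : ‖cdr (fderiv ℝ r p) X‖ ^ 2 ≤ 2 * b ^ 2 + 2 * (‖fderiv ℝ r p - fderiv ℝ r z‖ * ‖X‖) ^ 2 := by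
      have := pow_le_pow_left₀ (norm_nonneg _) g2 2
      linarith [sq_nonneg (b - ‖fderiv ℝ r p - fderiv ℝ r z‖ * ‖X‖)]
    have g4 : 2 * A * ‖cdr (fderiv ℝ r p) X‖ ^ 2 ≤ 2 * A * (2 * b ^ 2 + 2 * (‖fderiv ℝ r p - fderiv ℝ r z‖ * ‖X‖) ^ 2) := by
      gcongr
    have g5 := mul_le_mul_of_nonneg_right h1.le (sq_nonneg ‖X‖)
    have g6 := mul_le_mul_of_nonneg_left hXL (by positivity : 0 ≤ e / 2)
    have g7 : 0 ≤ 2 * A * ‖cdr (fderiv ℝ r p) X‖ ^ 2 := by positivity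
    have a := abs_le.1 g1
    rw [abs_le]
    constructor
    · rw [hL]; linarith [a.1]
    · rw [hL]
      have : 0 ≤ 4 * A * ‖fderiv ℝ r p - fderiv ℝ r z‖ ^ 2 * ‖X‖ ^ 2 := by positivity
      have : 0 ≤ 4 * A * b ^ 2 := by positivity
      linarith [a.2]
  obtain ⟨c1, c2, c3, c4⟩ := cmp_real b q L (- r z) A e (by linarith) hA he0 he1 hL0 hqL h2.le
  have e1 : ‖cdr ((1 + 2 * A * r z) • fderiv ℝ r z) X‖ ^ 2 = ((1 - 2 * (A * (- r z))) * b) ^ 2 := by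
    rw [cdr_smul, norm_mul, mul_pow, Complex.norm_real, Real.norm_eq_abs, sq_abs]; ring
  have e2 : -(r z + A * r z ^ 2) = (- r z) * (1 - A * (- r z)) := by ring
  rw [e1, e2]
  have k1 := mul_le_mul_of_nonneg_left c2 hτ0.le
  have k2 := mul_le_mul_of_nonneg_left c4 hτ0.le
  have k3 : τ * ((1 + e) * (b ^ 2 / (-r z) ^ 2 + L / -r z)) = (1 - e) * (b ^ 2 / (-r z) ^ 2 + L / -r z) := by
    rw [← hte, mul_assoc]
  rw [k3] at k1 k2
  exact ⟨k2.trans c1, k1.trans c3⟩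

theorem kob_sandwich {n : ℕ} {Ω : Set (Cn n)} {p : Cn n} {r : Cn n → ℝ} {a : Cn n → Cn n →L[ℂ] ℂ}
    {S : Cn n →L[ℂ] Cn n →L[ℂ] ℂ} {L : Cn n → ℝ} {c C : ℝ} (H : LocData Ω p r a S L c C)
    (τ : ℝ) (hτ0 : 0 < τ) (hτ : τ < 1) :
    ∀ᶠ z in 𝓝 p, z ∈ Ω → ∀ X,
      Real.sqrt (τ ^ 3 * (‖a z X‖ ^ 2 / (- r z) ^ 2 + L X / (- r z))) ≤ kobayashi Ω z X ∧
      kobayashi Ω z X ≤ Real.sqrt (‖a z X‖ ^ 2 / (- r z) ^ 2 + L X / (- r z)) / τ := by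
  obtain ⟨V1, hV1, hlo⟩ := H.lower τ τ hτ0 hτ hτ0 hτ
  obtain ⟨V2, hV2, hup⟩ := H.upper τ hτ0 hτ
  filter_upwards [ball_mem_nhds p hV1, ball_mem_nhds p hV2, H.dom] with z hz1 hz2 hdom hz X
  have hδ : 0 < - r z := by have := hdom.1 hz; linarith
  have hLpos : ∀ w, w ≠ 0 → 0 < L w := fun w hw => by
    have h1 := H.Llow w
    have h2 := norm_pos_iff.2 hw
    have h3 := H.cpos
    have : 0 < c * ‖w‖ ^ 2 := by positivity
    linarith
  have hL0 : ∀ w, 0 ≤ L w := fun w => by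
    have h1 := H.Llow w
    have h3 := H.cpos
    have : 0 ≤ c * ‖w‖ ^ 2 := by positivity
    linarith
  have hsc : ∀ (m : ℂ) w, ‖a z (m • w)‖ ^ 2 / (- r z) ^ 2 + L (m • w) / (- r z)
      = ‖m‖ ^ 2 * (‖a z w‖ ^ 2 / (- r z) ^ 2 + L w / (- r z)) := by
    intro m w
    rw [H.Lsm, map_smul, norm_smul]; ring
  set N := ‖a z X‖ ^ 2 / (- r z) ^ 2 + L X / (- r z) with hN
  have hN0 : 0 ≤ N := by have := hL0 X; positivity
  have hmem : Real.sqrt N / τ ∈ {r : ℝ | ∃ (α : ℂ) (φ : ℂ → Cn n),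
      DifferentiableOn ℂ φ (Metric.ball 0 1) ∧ Set.MapsTo φ (Metric.ball 0 1) Ω ∧
      φ 0 = z ∧ α • deriv φ 0 = X ∧ r = ‖α‖} := by
    by_cases hX : X = 0
    · subst hX
      have hL00 : L 0 = 0 := by have := H.Lsm 0 0; simpa using this
      have hNz : N = 0 := by rw [hN, hL00]; simp
      refine ⟨0, fun _ => z, differentiableOn_const _, fun _ _ => hz, rfl, by simp, ?_⟩
      rw [hNz]; simp
    · have hNp : 0 < N := by
        have h1 := hLpos X hX
        have : 0 < L X / (- r z) := by positivity
        have : 0 ≤ ‖a z X‖ ^ 2 / (- r z) ^ 2 := by positivity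
        linarith
      have hs : 0 < Real.sqrt N := Real.sqrt_pos.2 hNp
      have h1 := hsc (((Real.sqrt N)⁻¹ : ℝ) : ℂ) X
      rw [← hN, Complex.norm_real, Real.norm_of_nonneg (by positivity), inv_pow, Real.sq_sqrt hN0,
        inv_mul_cancel₀ hNp.ne'] at h1
      obtain ⟨φ, hφ1, hφ2, hφ3, hφ4⟩ := hup z ⟨hz, hz2⟩ _ h1
      refine ⟨((Real.sqrt N / τ : ℝ) : ℂ), φ, hφ1, hφ2, hφ3, ?_, ?_⟩
      · rw [hφ4, smul_smul, smul_smul]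
        have : ((Real.sqrt N / τ : ℝ) : ℂ) * ((τ : ℂ) * (((Real.sqrt N)⁻¹ : ℝ) : ℂ)) = 1 := by
          rw [← Complex.ofReal_mul, ← Complex.ofReal_mul]
          have : Real.sqrt N / τ * (τ * (Real.sqrt N)⁻¹) = 1 := by field_simp
          rw [this]; simp
        rw [mul_assoc, this, one_smul]
      · rw [Complex.norm_real, Real.norm_of_nonneg (by positivity)]
  constructor
  · refine le_csInf ⟨_, hmem⟩ ?_
    rintro b ⟨α, φ, hφ1, hφ2, hφ3, hφ4, rfl⟩
    have h := hlo φ hφ1 hφ2 (by rw [hφ3]; exact hz1)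
    rw [hφ3] at h
    rw [Real.sqrt_le_left (norm_nonneg _), hN, ← hφ4, hsc]
    have k0 : 0 ≤ ‖a z (deriv φ 0)‖ ^ 2 / (- r z) ^ 2 := by positivity
    have k1 : 0 ≤ L (deriv φ 0) / (- r z) := div_nonneg (hL0 _) hδ.le
    have k2 : τ ^ 3 * (‖a z (deriv φ 0)‖ ^ 2 / (- r z) ^ 2 + L (deriv φ 0) / (- r z)) ≤ 1 := by
      refine le_trans ?_ h
      rw [pow_succ, mul_assoc]
      apply mul_le_mul_of_nonneg_left _ (by positivity)
      nlinarith
    have := mul_le_mul_of_nonneg_left k2 (sq_nonneg ‖α‖)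
    linarith
  · refine csInf_le ⟨0, ?_⟩ hmem
    rintro b ⟨α, φ, -, -, -, -, rfl⟩
    exact norm_nonneg _

theorem sd_main_Cn {n : ℕ} (Ω W : Set (Cn n)) (hΩ : IsOpen Ω) (p : Cn n) (hp : p ∈ frontier Ω)
    (hW : IsOpen W) (hpW : p ∈ W)
    (ρ : Cn n → ℝ) (hρW : ContDiffOn ℝ 2 ρ W) (hdef : Ω ∩ W = {z ∈ W | ρ z < 0}) (hne : fderiv ℝ ρ p ≠ 0) :
    ∃ r : Cn n → ℝ, ContDiffAt ℝ 2 r p ∧ r p = 0 ∧ (∀ᶠ z in 𝓝 p, z ∈ Ω ↔ r z < 0) ∧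
      (∀ᶠ z in 𝓝 p, z ∈ Ω → bdist Ω z = - r z) ∧
      ∃ l > (0:ℝ), fderiv ℝ r p = l • fderiv ℝ ρ p ∧ ∀ X Y, fderiv ℝ ρ p X = 0 → fderiv ℝ ρ p Y = 0 →
          fderiv ℝ (fderiv ℝ r) p X Y = l * fderiv ℝ (fderiv ℝ ρ) p X Y :=
  sd_main Ω W hΩ p hp hW hpW ρ hρW hdef hne

theorem fderiv_apply_eq {n : ℕ} (r : Cn n → ℝ) (z X Y : Cn n) (h : ContDiffAt ℝ 2 r z) :
    fderiv ℝ (fun w => fderiv ℝ r w X) z Y = fderiv ℝ (fderiv ℝ r) z Y X := by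
  have hfd : ContDiffAt ℝ 1 (fderiv ℝ r) z := h.fderiv_right (by norm_num)
  have hd := (hfd.differentiableAt (by norm_num)).hasFDerivAt
  have h2 := hd.clm_apply (hasFDerivAt_const X z)
  rw [h2.fderiv]
  simp

theorem leviForm_eq {n : ℕ} (r : Cn n → ℝ) (z X : Cn n) (h : ContDiffAt ℝ 2 r z) :
    leviForm r z X = levQ (fderiv ℝ (fderiv ℝ r) z) X := by
  unfold leviForm levQ
  rw [fderiv_apply_eq r z X X h, fderiv_apply_eq r z _ _ h]

theorem cderiv_eq {n : ℕ} (r : Cn n → ℝ) (z X : Cn n) :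
    cderiv r z X = cdr (fderiv ℝ r z) X := by
  rw [cdr_apply]; rfl

theorem leviForm_congr {n : ℕ} (r s : Cn n → ℝ) (z X : Cn n) (h : r =ᶠ[𝓝 z] s) :
    leviForm r z X = leviForm s z X := by
  have h1 : ∀ Y : Cn n, fderiv ℝ (fun w => fderiv ℝ r w Y) z = fderiv ℝ (fun w => fderiv ℝ s w Y) z := by
    intro Y
    apply Filter.EventuallyEq.fderiv_eq
    filter_upwards [h.fderiv (𝕜 := ℝ)] with w hw
    rw [hw]
  unfold leviForm
  rw [h1, h1]

theorem Mfun_eq {n : ℕ} (Ω : Set (Cn n)) (r : Cn n → ℝ) (z X : Cn n) (h : ContDiffAt ℝ 2 r z)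
    (hb : ∀ᶠ w in 𝓝 z, bdist Ω w = - r w) :
    Mfun Ω z X = Real.sqrt (‖cdr (fderiv ℝ r z) X‖ ^ 2 / (- r z) ^ 2
      + levQ (fderiv ℝ (fderiv ℝ r) z) X / (- r z)) := by
  have h0 := hb.self_of_nhds
  have h1 : leviForm (fun w => -(bdist Ω w)) z X = levQ (fderiv ℝ (fderiv ℝ r) z) X := by
    rw [← leviForm_eq r z X h]
    apply leviForm_congr
    filter_upwards [hb] with w hw
    rw [hw, neg_neg]
  have h2 : cderiv (bdist Ω) z X = - cdr (fderiv ℝ r z) X := by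
    rw [cderiv_eq]
    have : fderiv ℝ (bdist Ω) z = - fderiv ℝ r z := by
      rw [Filter.EventuallyEq.fderiv_eq hb]
      exact fderiv_neg
    rw [this, cdr_apply, cdr_apply]
    simp
    ring
  unfold Mfun
  rw [h1, h2, h0, norm_neg]

theorem final_real (τ η M N k : ℝ) (hτ0 : 0 < τ) (hτ1 : τ < 1) (hτ : τ ^ 2 = (1 + η)⁻¹) (hη : 0 < η)
    (h1 : τ * N ≤ M) (h2 : τ * M ≤ N) (h3 : Real.sqrt (τ ^ 3 * N) ≤ k) (h4 : k ≤ Real.sqrt N / τ) :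
    (1 - η) * Real.sqrt M ≤ k ∧ k ≤ (1 + η) * Real.sqrt M := by
  have hN : 0 ≤ N := by
    have e1 := mul_le_mul_of_nonneg_left h1 hτ0.le
    by_contra h
    push Not at h
    have e2 : 0 < (1 - τ ^ 2) * (-N) := mul_pos (by nlinarith) (by linarith)
    linarith
  have hM : 0 ≤ M := le_trans (by positivity) h1
  have hs := Real.sqrt_nonneg M
  constructor
  · have e1 : Real.sqrt (τ ^ 4 * M) ≤ Real.sqrt (τ ^ 3 * N) := by
      apply Real.sqrt_le_sqrt
      have := mul_le_mul_of_nonneg_left h2 (by positivity : 0 ≤ τ ^ 3)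
      linarith
    rw [show τ ^ 4 = (τ ^ 2) ^ 2 by ring, Real.sqrt_mul (by positivity), Real.sqrt_sq (by positivity)] at e1
    have e2 : 1 - η ≤ τ ^ 2 := by
      rw [hτ, inv_eq_one_div, le_div_iff₀ (by linarith)]
      nlinarith
    have := mul_le_mul_of_nonneg_right e2 hs
    linarith
  · have e1 : Real.sqrt (τ ^ 2 * N) ≤ Real.sqrt M := by
      apply Real.sqrt_le_sqrt
      nlinarith
    rw [Real.sqrt_mul (by positivity), Real.sqrt_sq hτ0.le] at e1
    have e2 : 1 + η = (τ ^ 2)⁻¹ := by rw [hτ, inv_inv]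
    rw [e2]
    refine h4.trans ?_
    rw [div_le_iff₀ hτ0]
    have : (τ ^ 2)⁻¹ * Real.sqrt M * τ = Real.sqrt M / τ := by field_simp
    rw [this, le_div_iff₀ hτ0]
    linarith

/-- Near a `C²`-smooth strictly pseudoconvex boundary point, for every
`η > 0` one has `(1-η)·M(z;X) ≤ κ_Ω(z;X) ≤ (1+η)·M(z;X)` sufficiently close to `p`. -/
theorem kobayashi_estimate_C2 (n : ℕ) (Ω : Set (Cn n)) (hopen : IsOpen Ω) (hconn : IsConnected Ω)
    (p : Cn n) (hp : IsStrictPscPtC2 Ω p) :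
    ∀ η : ℝ, 0 < η → ∃ U : Set (Cn n), IsOpen U ∧ p ∈ U ∧
      ∀ z ∈ Ω ∩ U, ∀ X : Cn n,
        (1 - η) * Mfun Ω z X ≤ kobayashi Ω z X ∧
        kobayashi Ω z X ≤ (1 + η) * Mfun Ω z X := by
  intro η hη
  obtain ⟨hp1, W, hW, hpW, ρ, g1, g2, g3, g4⟩ := hp
  obtain ⟨r, hr, hrp, hdom, hbd, l, hl, hl1, hl2⟩ :=
    sd_main_Cn Ω W hopen p hp1 hW hpW ρ g1 g2 (g3 p ⟨hp1, hpW⟩)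
  have hρ : ContDiffAt ℝ 2 ρ p := g1.contDiffAt (hW.mem_nhds hpW)
  have hne : cdr (fderiv ℝ r p) ≠ 0 := by
    intro h0
    apply g3 p ⟨hp1, hpW⟩
    ext w
    have h1 := cdr_re (fderiv ℝ r p) w
    rw [h0, hl1] at h1
    simp at h1
    rcases h1 with h1 | h1
    · exact absurd h1 hl.ne'
    · simpa using h1
  have hpos : ∀ X, X ≠ 0 → cdr (fderiv ℝ r p) X = 0 → 0 < levQ (fderiv ℝ (fderiv ℝ r) p) X := by
    intro X hX h0
    rw [hl1, cdr_smul] at h0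
    have h1 : cdr (fderiv ℝ ρ p) X = 0 := by
      rcases mul_eq_zero.1 h0 with h | h
      · exact absurd (Complex.ofReal_eq_zero.1 h) hl.ne'
      · exact h
    have h2 := g4 p ⟨hp1, hpW⟩ X hX (by rw [cderiv_eq, h1])
    rw [leviForm_eq ρ p X hρ] at h2
    have h3 := cdr_normsq (fderiv ℝ ρ p) X
    rw [h1] at h3
    simp at h3
    have h4 : fderiv ℝ ρ p X = 0 := by nlinarith [sq_nonneg (fderiv ℝ ρ p X), sq_nonneg (fderiv ℝ ρ p (Complex.I • X))]
    have h5 : fderiv ℝ ρ p (Complex.I • X) = 0 := by nlinarith [sq_nonneg (fderiv ℝ ρ p X), sq_nonneg (fderiv ℝ ρ p (Complex.I • X))]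
    have h6 : levQ (fderiv ℝ (fderiv ℝ r) p) X = l * levQ (fderiv ℝ (fderiv ℝ ρ) p) X := by
      unfold levQ
      rw [hl2 X X h4 h4, hl2 _ _ h5 h5]; ring
    rw [h6]
    exact mul_pos hl h2
  obtain ⟨A, hA, S, c, C, H⟩ := tilde_data Ω p r hr hrp hdom hne hpos
  obtain ⟨τ, hτ0, hτ1, hτ⟩ : ∃ τ : ℝ, 0 < τ ∧ τ < 1 ∧ τ ^ 2 = (1 + η)⁻¹ := by
    refine ⟨Real.sqrt ((1 + η)⁻¹), Real.sqrt_pos.2 (by positivity), ?_, Real.sq_sqrt (by positivity)⟩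
    rw [Real.sqrt_lt' one_pos, one_pow]
    exact inv_lt_one_of_one_lt₀ (by linarith)
  have ev1 := cmp_data p r hr hrp A c hA H.cpos H.Llow τ hτ0 hτ1
  have ev2 := kob_sandwich H τ hτ0 hτ1
  have ev3 := hr.eventually (by simp)
  have ev4 := eventually_eventually_nhds.2 hbd
  obtain ⟨V, hV, hB⟩ := Metric.eventually_nhds_iff_ball.1 ((ev1.and ev2).and ((ev3.and ev4).and hdom))
  refine ⟨ball p V, isOpen_ball, mem_ball_self hV, ?_⟩
  rintro z ⟨hz, hzV⟩ X
  obtain ⟨⟨k1, k2⟩, ⟨k3, k4⟩, k5⟩ := hB z hzV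
  have hb : ∀ᶠ w in 𝓝 z, bdist Ω w = - r w := by
    filter_upwards [k4, hopen.mem_nhds hz] with w h1 h2 using h1 h2
  rw [Mfun_eq Ω r z X k3 hb]
  obtain ⟨c1, c2⟩ := k1 (k5.1 hz) X
  obtain ⟨d1, d2⟩ := k2 hz X
  exact final_real τ η _ _ _ hτ0 hτ1 hτ hη c1 c2 d1 d2

end
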